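/- arXiv:2406.12322 — 2 statements merged into one kernel-verified Lean document; each statement's English description precedes it below -/
import Mathlib

section
/- Let $w \in F_2$ have length $l$, and let $\varphi$ be any automorphism of $F_2$. Then in the cyclic reduction of $\varphi(w)$, every maximal block of powers of $a$ or of $b$ has exponent of absolute value at most $l+1$, possibly after composing $\varphi$ with the automorphism swapping $a$ and $b$ and/or inverting generators; in particular the cyclic reduction of $\varphi(w)$ cannot contain both $a^{l+2}$ and $b^{l+2}$ as subwords simultaneously. -/
open FreeGroup List

abbrev F2 := FreeGroup (Fin 2)

/-- The generator `a` of `F₂`. -/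
def ga : F2 := FreeGroup.of 0

/-- The generator `b` of `F₂`. -/
def gb : F2 := FreeGroup.of 1

/-- `v` contains a block `x^{±k}`: `k` consecutive occurrences of the letter `x`
with the same sign, as a contiguous subword of the reduced word of `v`.
Thus "every `x`-exponent of `v` has absolute value `≤ n`" is `¬ HasBlock x (n+1) v`. -/
def HasBlock (x : Fin 2) (k : ℕ) (v : F2) : Prop :=
  (List.replicate k (x, true)) <:+: v.toWord ∨ (List.replicate k (x, false)) <:+: v.toWord

/-- A reduced word is cyclically reduced if its last letter is not
the inverse of its first letter. -/
def CyclicallyReduced (l : List (Fin 2 × Bool)) : Prop :=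
  ∀ p ∈ l.head?, ∀ q ∈ l.getLast?, q ≠ (p.1, !p.2)

/-- `(x, y)` is a basis of `F₂`: the image of `(a, b)` under an automorphism. -/
def IsBasis (x y : F2) : Prop := ∃ φ : F2 ≃* F2, φ ga = x ∧ φ gb = y

/-!
A basis of `F₂` is, up to conjugation and inverting generators and basis elements, made of positive
words in which one of the two generators, say `x`, never occurs twice in a row. Writing `w` in such
a basis, the only places where `x` can meet `x` in a reduced word are the junctions between basis
elements, and there are at most as many of them as letters of `w`. Conjugation disturbs this count
by a bounded amount only, so applying it to the powers of `w` bounds the count for the cyclic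
reduction.

The description of the bases follows from Nielsen reduction: a family of generating pairs stable
under Nielsen transformations and conjugation contains a pair of minimal total length, and such a
pair consists of two letters.
-/

section CommonPrefix

variable {β : Type*} [DecidableEq β]

/-- The length of the longest common prefix of two lists. For the reduced words of two elements of a
free group it is their Gromov product in the Cayley tree. -/
def lcpLength : List β → List β → ℕ
  | a :: u, b :: v => if a = b then lcpLength u v + 1 else 0
  | _, _ => 0

theorem lcpLength_comm (u v : List β) : lcpLength u v = lcpLength v u := by
  induction u generalizing v with
  | nil => cases v <;> rfl
  | cons a u ih => cases v <;> grind [lcpLength]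

theorem min_lcpLength_le (u v w : List β) :
    min (lcpLength u v) (lcpLength v w) ≤ lcpLength u w := by
  induction u generalizing v w with
  | nil => simp [lcpLength]
  | cons a u ih => cases v <;> cases w <;> grind [lcpLength]

theorem exists_eq_append_lcpLength (u v : List β) :
    ∃ p u' v', u = p ++ u' ∧ v = p ++ v' ∧ p.length = lcpLength u v ∧
      ∀ s ∈ u'.head?, ∀ t ∈ v'.head?, s ≠ t := by
  induction u generalizing v with
  | nil => exact ⟨[], [], v, by simp [lcpLength]⟩
  | cons a u ih =>
    rcases v with _ | ⟨b, v⟩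
    · exact ⟨[], a :: u, [], by simp [lcpLength]⟩
    by_cases hab : a = b
    · obtain ⟨p, u', v', hu, hv, hp, hne⟩ := ih v
      exact ⟨a :: p, u', v', by simp [hu], by simp [hab, hv], by simp [lcpLength, hab, hp], hne⟩
    · exact ⟨[], a :: u, b :: v, by simpa [lcpLength] using hab⟩

end CommonPrefix

section Cancellation

variable {α : Type*}

theorem isReduced_invRev {L : List (α × Bool)} (hL : FreeGroup.IsReduced L) :
    FreeGroup.IsReduced (invRev L) := by
  classical
  rw [isReduced_iff_reduce_eq, reduce_invRev, hL.reduce_eq]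

theorem isReduced_invRev_append {u v : List (α × Bool)} (hu : FreeGroup.IsReduced u)
    (hv : FreeGroup.IsReduced v) (hne : ∀ s ∈ u.head?, ∀ t ∈ v.head?, s ≠ t) :
    FreeGroup.IsReduced (invRev u ++ v) := by
  refine (isReduced_invRev hu).append hv fun r hr t ht hrt => ?_
  obtain ⟨s, hs, rfl⟩ : ∃ s ∈ u.head?, (s.1, !s.2) = r := by
    simpa [invRev, and_assoc] using hr
  exact Bool.not_eq.2 fun h => hne s hs t ht (Prod.ext hrt h)

variable [DecidableEq α]

/-- The number of letters of `h` that cancel in the product `g * h`, that is, the Gromov product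
of `g⁻¹` and `h` in the Cayley tree. -/
def cancelLength (g h : FreeGroup α) : ℕ := lcpLength g⁻¹.toWord h.toWord

theorem exists_toWord_mul_eq_append (g h : FreeGroup α) :
    ∃ p q r, g.toWord = p ++ invRev q ∧ h.toWord = q ++ r ∧ (g * h).toWord = p ++ r ∧
      q.length = cancelLength g h := by
  obtain ⟨q, u, r, hg, hh, hq, hne⟩ := exists_eq_append_lcpLength g⁻¹.toWord h.toWord
  have hg' : g.toWord = invRev u ++ invRev q := by
    rw [← invRev_append, ← hg, ← toWord_inv, inv_inv]
  have hu : FreeGroup.IsReduced u := isReduced_toWord.infix ⟨q, [], by rw [hg, append_nil]⟩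
  have hr : FreeGroup.IsReduced r := isReduced_toWord.infix ⟨q, [], by rw [hh, append_nil]⟩
  have hgh : g * h = mk (invRev u ++ r) := by
    rw [← mk_toWord (x := g), ← mk_toWord (x := h), hg', hh]
    simp only [← mul_mk, ← inv_mk]
    group
  refine ⟨invRev u, q, r, hg', hh, ?_, hq⟩
  rw [hgh, toWord_mk, (isReduced_invRev_append hu hr hne).reduce_eq]

theorem cancelLength_le_norm_left (g h : FreeGroup α) : cancelLength g h ≤ g.norm := by
  obtain ⟨p, q, r, hg, -, -, hq⟩ := exists_toWord_mul_eq_append g h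
  simp [FreeGroup.norm, hg, ← hq]

theorem norm_mul_add_two_mul_cancelLength (g h : FreeGroup α) :
    (g * h).norm + 2 * cancelLength g h = g.norm + h.norm := by
  obtain ⟨p, q, r, hg, hh, hgh, hq⟩ := exists_toWord_mul_eq_append g h
  simp only [FreeGroup.norm, hg, hh, hgh, ← hq, length_append, invRev_length]
  ring

theorem cancelLength_inv_inv (g h : FreeGroup α) :
    cancelLength h⁻¹ g⁻¹ = cancelLength g h := by
  rw [cancelLength, cancelLength, inv_inv, lcpLength_comm]

theorem cancelLength_le_norm_right (g h : FreeGroup α) : cancelLength g h ≤ h.norm := by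
  rw [← cancelLength_inv_inv, ← norm_inv_eq (x := h)]
  exact cancelLength_le_norm_left _ _

/-- The ultrametric inequality for Gromov products. -/
theorem min_cancelLength_le (u v w : FreeGroup α) :
    min (cancelLength u v) (cancelLength v⁻¹ w) ≤ cancelLength u w := by
  simpa only [cancelLength, inv_inv] using min_lcpLength_le u⁻¹.toWord v.toWord w.toWord

theorem norm_lt_norm_mul_self {g : FreeGroup α} (hg : g ≠ 1) : g.norm < (g * g).norm := by
  let k := reduceCyclically.conjugator g.toWord
  let c := reduceCyclically g.toWord
  have hword : k ++ c ++ invRev k = g.toWord :=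
    reduceCyclically.conj_conjugator_reduceCyclically g.toWord
  have hsq : (g * g).toWord = k ++ (c ++ c) ++ invRev k := by
    simpa [toWord_mul, k, c] using
      reduceCyclically.reduce_flatten_replicate_succ (isReduced_toWord (x := g)) 1
  have hc : 0 < c.length := by
    refine List.length_pos_of_ne_nil fun hc => hg ?_
    rw [← mk_toWord (x := g), ← hword, hc, append_nil, ← mul_mk, ← inv_mk, mul_inv_cancel]
  simp only [FreeGroup.norm, hsq, ← hword, length_append]
  omega

theorem two_mul_cancelLength_self_lt {g : FreeGroup α} (hg : g ≠ 1) :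
    2 * cancelLength g g < g.norm := by
  have := norm_mul_add_two_mul_cancelLength g g
  have := norm_lt_norm_mul_self hg
  omega

theorem le_cancelLength_mul_left {g u v : FreeGroup α}
    (h : cancelLength g u + cancelLength u v ≤ u.norm) :
    cancelLength u v ≤ cancelLength (g * u) v := by
  have hgu := norm_mul_add_two_mul_cancelLength g u
  have hg := norm_mul_add_two_mul_cancelLength (g * u) u⁻¹
  have hmin := min_cancelLength_le (g * u) u⁻¹ v
  rw [mul_inv_cancel_right, norm_inv_eq] at hg
  rw [inv_inv] at hmin
  omega

theorem cancelLength_mul_left {g u v : FreeGroup α}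
    (h : cancelLength g u + cancelLength u v < u.norm) :
    cancelLength (g * u) v = cancelLength u v := by
  refine le_antisymm ?_ (le_cancelLength_mul_left h.le)
  have hgu := norm_mul_add_two_mul_cancelLength g u
  have hg := norm_mul_add_two_mul_cancelLength (g * u) u⁻¹
  have hmin := min_cancelLength_le u (g * u)⁻¹ v
  rw [mul_inv_cancel_right, norm_inv_eq] at hg
  rw [inv_inv, ← cancelLength_inv_inv, inv_inv] at hmin
  omega

theorem cancelLength_mul_right {u v g : FreeGroup α}
    (h : cancelLength u v + cancelLength v g < v.norm) :
    cancelLength u (v * g) = cancelLength u v := by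
  rw [← cancelLength_inv_inv, mul_inv_rev, ← cancelLength_inv_inv u v]
  apply cancelLength_mul_left
  rw [cancelLength_inv_inv, cancelLength_inv_inv, norm_inv_eq]
  omega

theorem norm_mul_mul_add_le {g u v : FreeGroup α}
    (h : cancelLength g u + cancelLength u v ≤ u.norm) :
    (g * u * v).norm + 2 * cancelLength g u + 2 * cancelLength u v ≤
      g.norm + u.norm + v.norm := by
  have := norm_mul_add_two_mul_cancelLength g u
  have := norm_mul_add_two_mul_cancelLength (g * u) v
  have := le_cancelLength_mul_left h
  omega

theorem exists_mul_eq_of_le_norm {g : FreeGroup α} {n : ℕ} (hn : n ≤ g.norm) :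
    ∃ p q : FreeGroup α, p * q = g ∧ p.norm = n ∧ p.norm + q.norm = g.norm := by
  have hp : (mk (g.toWord.take n)).norm ≤ n := norm_mk_le.trans (by simp)
  have hq : (mk (g.toWord.drop n)).norm ≤ g.norm - n := norm_mk_le.trans (by simp [FreeGroup.norm])
  have hpq : mk (g.toWord.take n) * mk (g.toWord.drop n) = g := by
    rw [mul_mk, take_append_drop, mk_toWord]
  have := norm_mul_le (mk (g.toWord.take n)) (mk (g.toWord.drop n))
  rw [hpq] at this
  exact ⟨_, _, hpq, by omega, by omega⟩

theorem norm_pow_le_mul (g : FreeGroup α) (n : ℕ) : (g ^ n).norm ≤ n * g.norm := by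
  induction n with
  | zero => simp
  | succ n ih =>
    rw [pow_succ, Nat.succ_mul]
    exact (FreeGroup.norm_mul_le _ _).trans (Nat.add_le_add_right ih _)

theorem exists_eq_mk_singleton_of_norm_eq_one {g : FreeGroup α} (hg : g.norm = 1) :
    ∃ s, g = mk [s] := by
  obtain ⟨s, hs⟩ := List.length_eq_one_iff.1 hg
  exact ⟨s, by rw [← hs, mk_toWord]⟩

end Cancellation

section NielsenReduced

variable {ι α : Type*}

/-- The value of a letter (a generator, or the inverse of one when its sign is `false`) under the
substitution `f`. -/
def letterValue {G : Type*} [Group G] (f : ι → G) (s : ι × Bool) : G :=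
  cond s.2 (f s.1) (f s.1)⁻¹

theorem lift_eq_prod_map_letterValue {G : Type*} [Group G] [DecidableEq ι] (f : ι → G)
    (w : FreeGroup ι) : lift f w = (w.toWord.map (letterValue f)).prod := by
  conv_lhs => rw [← mk_toWord (x := w)]
  exact lift_mk

variable [DecidableEq α]

theorem norm_letterValue (f : ι → FreeGroup α) (s : ι × Bool) :
    (letterValue f s).norm = (f s.1).norm := by
  rcases s with ⟨i, _ | _⟩ <;> simp [letterValue]

/-- A Nielsen reduced family: in a product of two letters of a reduced word at most half of each
factor cancels, and in a product of three letters the middle factor is not cancelled entirely. -/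
structure IsNielsenReduced (f : ι → FreeGroup α) : Prop where
  two_mul_cancelLength_le {s t : ι × Bool} (hst : s.1 = t.1 → s.2 = t.2) :
    2 * cancelLength (letterValue f s) (letterValue f t) ≤
      min (letterValue f s).norm (letterValue f t).norm
  cancelLength_add_lt {s t r : ι × Bool} (hst : s.1 = t.1 → s.2 = t.2)
    (htr : t.1 = r.1 → t.2 = r.2) :
    cancelLength (letterValue f s) (letterValue f t) +
      cancelLength (letterValue f t) (letterValue f r) < (letterValue f t).norm

namespace IsNielsenReduced

variable {f : ι → FreeGroup α}

theorem cancelLength_prod (hf : IsNielsenReduced f) {s t : ι × Bool} {L : List (ι × Bool)}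
    (hL : FreeGroup.IsReduced (s :: t :: L)) :
    cancelLength (letterValue f s) ((t :: L).map (letterValue f)).prod =
      cancelLength (letterValue f s) (letterValue f t) := by
  induction L generalizing s t with
  | nil => simp
  | cons r L ih =>
    obtain ⟨hst, hL⟩ := List.isChain_cons_cons.1 hL
    rw [List.map_cons, List.prod_cons]
    apply cancelLength_mul_right
    rw [ih hL]
    exact hf.cancelLength_add_lt hst (List.isChain_cons_cons.1 hL).1

theorem norm_letterValue_le_norm_prod (hf : IsNielsenReduced f) {L : List (ι × Bool)}
    (hL : FreeGroup.IsReduced L) {t : ι × Bool} (ht : t ∈ L) :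
    (letterValue f t).norm ≤ (L.map (letterValue f)).prod.norm := by
  induction L generalizing t with
  | nil => simp at ht
  | cons s L ih =>
    rcases L with _ | ⟨r, L⟩
    · simp_all
    obtain ⟨hsr, hL'⟩ := List.isChain_cons_cons.1 hL
    have hnorm := norm_mul_add_two_mul_cancelLength (letterValue f s)
      ((r :: L).map (letterValue f)).prod
    rw [hf.cancelLength_prod hL, ← List.prod_cons, ← List.map_cons] at hnorm
    have hcancel := hf.two_mul_cancelLength_le hsr
    have hr := ih hL' (List.mem_cons_self (a := r))
    rcases List.mem_cons.1 ht with rfl | ht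
    · omega
    · have := ih hL' ht
      omega

theorem lift_mem_closure (hf : IsNielsenReduced f) (w : FreeGroup ι) :
    lift f w ∈ Subgroup.closure (f '' {i | (f i).norm ≤ (lift f w).norm}) := by
  classical
  have hletter : ∀ s ∈ w.toWord, (f s.1).norm ≤ (lift f w).norm := fun s hs => by
    rw [← norm_letterValue, lift_eq_prod_map_letterValue]
    exact hf.norm_letterValue_le_norm_prod isReduced_toWord hs
  generalize (lift f w).norm = n at hletter ⊢
  rw [lift_eq_prod_map_letterValue]
  refine list_prod_mem fun z hz => ?_
  obtain ⟨⟨i, b⟩, hs, rfl⟩ := List.mem_map.1 hz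
  have hi : f i ∈ Subgroup.closure (f '' {i | (f i).norm ≤ n}) :=
    Subgroup.subset_closure ⟨i, hletter _ hs, rfl⟩
  cases b
  exacts [inv_mem hi, hi]

theorem closure_norm_le_one_eq_top (hf : IsNielsenReduced f)
    (hgen : Subgroup.closure (Set.range f) = ⊤) :
    Subgroup.closure (f '' {i | (f i).norm ≤ 1}) = ⊤ := by
  classical
  rw [eq_top_iff, ← closure_range_of, Subgroup.closure_le]
  rintro _ ⟨a, rfl⟩
  obtain ⟨w, hw⟩ := lift_surjective_iff_closure_range_eq_top.2 hgen (of a)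
  have := hf.lift_mem_closure w
  rwa [hw, norm_of] at this

end IsNielsenReduced

end NielsenReduced

section NielsenMoves

variable {G : Type*} [Group G]

/-- A family of pairs of group elements that is stable under the elementary Nielsen
transformations and under simultaneous conjugation. -/
structure NielsenClosed (B : G → G → Prop) : Prop where
  swap {x y : G} : B x y → B y x
  inv {x y : G} : B x y → B x⁻¹ y
  mul {x y : G} : B x y → B (x * y) y
  conj {x y : G} (g : G) : B x y → B (g * x * g⁻¹) (g * y * g⁻¹)

namespace NielsenClosed

variable {B C : G → G → Prop}

theorem mul_inv (hB : NielsenClosed B) {x y : G} (h : B x y) : B (x * y⁻¹) y := by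
  have invRight : ∀ {u v : G}, B u v → B u v⁻¹ := fun h => hB.swap (hB.inv (hB.swap h))
  simpa using invRight (hB.mul (invRight h))

theorem compl (hB : NielsenClosed B) : NielsenClosed fun x y => ¬ B x y where
  swap := mt hB.swap
  inv := mt fun h => by simpa using hB.inv h
  mul := mt fun h => by simpa using hB.mul_inv h
  conj g := mt fun h => by simpa [mul_assoc] using hB.conj g⁻¹ h

theorem inter (hB : NielsenClosed B) (hC : NielsenClosed C) :
    NielsenClosed fun x y => B x y ∧ C x y where
  swap := And.imp hB.swap hC.swap
  inv := And.imp hB.inv hC.inv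
  mul := And.imp hB.mul hC.mul
  conj g := And.imp (hB.conj g) (hC.conj g)

end NielsenClosed

theorem mem_closure_pair_left (x y : G) : x ∈ Subgroup.closure {x, y} :=
  Subgroup.subset_closure (Set.mem_insert _ _)

theorem mem_closure_pair_right (x y : G) : y ∈ Subgroup.closure {x, y} :=
  Subgroup.subset_closure (Set.mem_insert_of_mem _ rfl)

theorem closure_pair_eq_top_of_mem {x y u v : G} (h : Subgroup.closure {x, y} = ⊤)
    (hx : x ∈ Subgroup.closure {u, v}) (hy : y ∈ Subgroup.closure {u, v}) :
    Subgroup.closure {u, v} = ⊤ := by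
  rw [eq_top_iff, ← h, Subgroup.closure_le]
  rintro z (rfl | rfl)
  exacts [hx, hy]

theorem nielsenClosed_closure_eq_top :
    NielsenClosed fun x y : G => Subgroup.closure {x, y} = ⊤ where
  swap h := by rwa [Set.pair_comm]
  inv {x y} h := closure_pair_eq_top_of_mem h
    (by simpa using inv_mem (mem_closure_pair_left x⁻¹ y)) (mem_closure_pair_right _ _)
  mul {x y} h := by
    refine closure_pair_eq_top_of_mem h ?_ (mem_closure_pair_right _ _)
    simpa using mul_mem (mem_closure_pair_left (x * y) y)
      (inv_mem (mem_closure_pair_right (x * y) y))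
  conj {x y} g h := by
    have := congrArg (Subgroup.map (MulAut.conj g).toMonoidHom) h
    rw [MonoidHom.map_closure, Set.image_pair,
      Subgroup.map_top_of_surjective _ (MulAut.conj g).surjective] at this
    simpa using this

theorem commute_of_closure_pair_eq_top {x y : G} (hxy : Commute x y)
    (h : Subgroup.closure {x, y} = ⊤) (a b : G) : Commute a b := by
  have hcomm := Subgroup.isMulCommutative_closure (k := {x, y}) (by
    rintro u (rfl | rfl) v (rfl | rfl)
    exacts [rfl, hxy.eq, hxy.eq.symm, rfl])
  rw [h] at hcomm
  exact congrArg Subtype.val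
    (hcomm.is_comm.comm (⟨a, Subgroup.mem_top a⟩ : (⊤ : Subgroup G)) ⟨b, Subgroup.mem_top b⟩)

end NielsenMoves

/-- A pair in the family `B` with the least possible total length; Nielsen reduction shows that such
pairs are Nielsen reduced. -/
def IsMinimalPair {α : Type*} [DecidableEq α] (B : FreeGroup α → FreeGroup α → Prop)
    (x y : FreeGroup α) : Prop :=
  B x y ∧ ∀ x' y', B x' y' → x.norm + y.norm ≤ x'.norm + y'.norm

namespace IsMinimalPair

variable {α : Type*} [DecidableEq α] {B : FreeGroup α → FreeGroup α → Prop}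
  {x y : FreeGroup α}

theorem exists_of_mem (h : B x y) : ∃ u v, IsMinimalPair B u v := by
  obtain ⟨⟨u, v⟩, huv, hmin⟩ := exists_minimalFor_of_wellFoundedLT
    (fun p : FreeGroup α × FreeGroup α => B p.1 p.2) (fun p => p.1.norm + p.2.norm) ⟨(x, y), h⟩
  refine ⟨u, v, huv, fun x' y' h' => ?_⟩
  exact (le_total _ _).elim id fun hle => hmin (j := (x', y')) h' hle

theorem swap (hB : NielsenClosed B) (h : IsMinimalPair B x y) : IsMinimalPair B y x :=
  ⟨hB.swap h.1, fun x' y' h' => (add_comm _ _).trans_le (h.2 x' y' h')⟩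

theorem inv_left (hB : NielsenClosed B) (h : IsMinimalPair B x y) : IsMinimalPair B x⁻¹ y :=
  ⟨hB.inv h.1, fun x' y' h' => by rw [norm_inv_eq]; exact h.2 x' y' h'⟩

theorem inv_right (hB : NielsenClosed B) (h : IsMinimalPair B x y) : IsMinimalPair B x y⁻¹ :=
  ((h.swap hB).inv_left hB).swap hB

theorem norm_left_le (hB : NielsenClosed B) (h : IsMinimalPair B x y) :
    x.norm ≤ (x * y).norm :=
  Nat.le_of_add_le_add_right (h.2 _ _ (hB.mul h.1))

theorem norm_right_le (hB : NielsenClosed B) (h : IsMinimalPair B x y) :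
    y.norm ≤ (x * y).norm := by
  have := (((h.swap hB).inv_left hB).inv_right hB).norm_left_le hB
  rwa [← mul_inv_rev, norm_inv_eq, norm_inv_eq] at this

theorem two_mul_cancelLength_le (hB : NielsenClosed B) (h : IsMinimalPair B x y) :
    2 * cancelLength x y ≤ min x.norm y.norm := by
  have := norm_mul_add_two_mul_cancelLength x y
  have := h.norm_left_le hB
  have := h.norm_right_le hB
  omega

theorem cancelLength_add_inv_lt (hB : NielsenClosed B) (h : IsMinimalPair B x y)
    (hy : y ≠ 1) : cancelLength x y + cancelLength y x⁻¹ < y.norm := by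
  have hxy := h.two_mul_cancelLength_le hB
  have hyx := ((h.inv_left hB).swap hB).two_mul_cancelLength_le hB
  have hyy := two_mul_cancelLength_self_lt hy
  have hmin := min_cancelLength_le y x⁻¹ y
  rw [inv_inv] at hmin
  omega

/-- If both products cancel exactly half of `y = p * q`, then `x` starts with `q⁻¹` and ends with
`p⁻¹`, and conjugating `(x * y, y)` by `q` gives the shorter pair `(q * x * p, q * p)`. -/
theorem cancelLength_add_lt (hB : NielsenClosed B) (h : IsMinimalPair B x y)
    (hy : y ≠ 1) : cancelLength x y + cancelLength y x < y.norm := by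
  by_contra! hle
  have hxy := h.two_mul_cancelLength_le hB
  have hyx := (h.swap hB).two_mul_cancelLength_le hB
  have hy0 : y.norm ≠ 0 := mt norm_eq_zero.1 hy
  obtain ⟨p, q, hpq, hp, hnorm⟩ := exists_mul_eq_of_le_norm (cancelLength_le_norm_right x y)
  have hxp : cancelLength x y ≤ cancelLength x p := by
    have hcancel := norm_mul_add_two_mul_cancelLength p⁻¹ y
    have hmin := min_cancelLength_le x y p
    rw [← cancelLength_inv_inv, inv_inv] at hcancel
    rw [show p⁻¹ * y = q by rw [← hpq, inv_mul_cancel_left], norm_inv_eq] at hcancel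
    omega
  have hqx : cancelLength y x ≤ cancelLength q x := by
    have hcancel := norm_mul_add_two_mul_cancelLength q y⁻¹
    have hmin := min_cancelLength_le q y⁻¹ x
    rw [show q * y⁻¹ = p⁻¹ by rw [← hpq]; group, norm_inv_eq, norm_inv_eq] at hcancel
    rw [inv_inv] at hmin
    omega
  have hx : (q * x * p).norm + y.norm < x.norm + y.norm := by
    have := cancelLength_le_norm_left q x
    have := cancelLength_le_norm_right x p
    have := norm_mul_mul_add_le (g := q) (u := x) (v := p) (by omega)
    omega
  have hqp := norm_mul_le q p
  have hmin := h.2 _ _ (hB.conj q (hB.mul h.1))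
  rw [show q * (x * y) * q⁻¹ = q * x * p by rw [← hpq]; group,
    show q * y * q⁻¹ = q * p by rw [← hpq]; group] at hmin
  omega

theorem letterValue_of_ne (hB : NielsenClosed B) (h : IsMinimalPair B x y)
    {s t : Fin 2 × Bool} (hst : s.1 ≠ t.1) :
    IsMinimalPair B (letterValue ![x, y] s) (letterValue ![x, y] t) := by
  have signs : ∀ {u v : FreeGroup α}, IsMinimalPair B u v → ∀ b c : Bool,
      IsMinimalPair B (cond b u u⁻¹) (cond c v v⁻¹) := by
    rintro u v h (_ | _) (_ | _)
    exacts [(h.inv_left hB).inv_right hB, h.inv_left hB, h.inv_right hB, h]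
  obtain ⟨i, b⟩ := s
  obtain ⟨j, c⟩ := t
  fin_cases i <;> fin_cases j
  exacts [absurd rfl hst, signs h b c, signs (h.swap hB) b c, absurd rfl hst]

theorem isNielsenReduced (hB : NielsenClosed B) (h : IsMinimalPair B x y) (hx : x ≠ 1)
    (hy : y ≠ 1) : IsNielsenReduced ![x, y] := by
  have hne : ∀ s, letterValue ![x, y] s ≠ 1 := by
    rintro ⟨i, _ | _⟩ <;> fin_cases i <;> simpa [letterValue]
  have half : ∀ {s t : Fin 2 × Bool}, (s.1 = t.1 → s.2 = t.2) →
      2 * cancelLength (letterValue ![x, y] s) (letterValue ![x, y] t) ≤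
        min (letterValue ![x, y] s).norm (letterValue ![x, y] t).norm := by
    intro s t hst
    by_cases h1 : s.1 = t.1
    · obtain rfl : s = t := Prod.ext h1 (hst h1)
      have := two_mul_cancelLength_self_lt (hne s)
      omega
    · exact (h.letterValue_of_ne hB h1).two_mul_cancelLength_le hB
  refine ⟨half, fun {s t r} hst htr => ?_⟩
  have hs := half hst
  have hr := half htr
  have ht := two_mul_cancelLength_self_lt (hne t)
  by_cases h1 : s.1 = t.1
  · obtain rfl : s = t := Prod.ext h1 (hst h1)
    omega
  by_cases h2 : t.1 = r.1
  · obtain rfl : t = r := Prod.ext h2 (htr h2)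
    omega
  have hmin := h.letterValue_of_ne hB h1
  have hrs : r = s ∨ letterValue ![x, y] r = (letterValue ![x, y] s)⁻¹ := by
    obtain ⟨i, b⟩ := r
    obtain ⟨j, c⟩ := s
    obtain rfl : i = j := by simp only at h1 h2; omega
    cases b <;> cases c <;> simp [letterValue]
  rcases hrs with rfl | hrs
  · exact hmin.cancelLength_add_lt hB (hne t)
  · rw [hrs]
    exact hmin.cancelLength_add_inv_lt hB (hne t)

end IsMinimalPair

section Nielsen

theorem not_commute_ga_gb : ¬ Commute ga gb := fun h =>
  absurd (congrArg toWord h.eq) (by decide)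

theorem not_commute_of_closure_eq_top {x y : F2} (h : Subgroup.closure {x, y} = ⊤) :
    ¬ Commute x y := fun hxy =>
  not_commute_ga_gb (commute_of_closure_pair_eq_top hxy h ga gb)

theorem IsNielsenReduced.norm_le_one {f : Fin 2 → F2} (hf : IsNielsenReduced f)
    (hgen : Subgroup.closure (Set.range f) = ⊤) (i : Fin 2) : (f i).norm ≤ 1 := by
  by_contra hi
  have hsub : f '' {j | (f j).norm ≤ 1} ⊆ {f (1 - i), f (1 - i)} := by
    rintro _ ⟨j, hj, rfl⟩
    have hji : j ≠ i := fun h => hi (h ▸ hj)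
    obtain rfl : j = 1 - i := by omega
    simp
  exact not_commute_of_closure_eq_top
    (top_le_iff.1 ((hf.closure_norm_le_one_eq_top hgen).ge.trans (Subgroup.closure_mono hsub)))
    (Commute.refl _)

/-- **Nielsen's theorem** in rank two. -/
theorem NielsenClosed.of_closure_eq_top {B : F2 → F2 → Prop} (hB : NielsenClosed B)
    (hletters : ∀ s t, ¬ Commute (FreeGroup.mk [s]) (FreeGroup.mk [t]) →
      B (FreeGroup.mk [s]) (FreeGroup.mk [t]))
    {x y : F2} (h : Subgroup.closure {x, y} = ⊤) : B x y := by
  by_contra hxy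
  have hC := nielsenClosed_closure_eq_top.inter hB.compl
  obtain ⟨u, v, hmin⟩ := IsMinimalPair.exists_of_mem 
    (B := fun x y => Subgroup.closure {x, y} = ⊤ ∧ ¬ B x y) ⟨h, hxy⟩
  obtain ⟨hgen, huv⟩ := hmin.1
  have hcomm := not_commute_of_closure_eq_top hgen
  have hu : u ≠ 1 := by rintro rfl; exact hcomm (Commute.one_left v)
  have hv : v ≠ 1 := by rintro rfl; exact hcomm (Commute.one_right u)
  have hnorm := (hmin.isNielsenReduced hC hu hv).norm_le_one (by simpa [Set.pair_comm] using hgen)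
  have letter : ∀ {g : F2}, g ≠ 1 → g.norm ≤ 1 → ∃ s, g = FreeGroup.mk [s] := fun hg hle =>
    exists_eq_mk_singleton_of_norm_eq_one
      (le_antisymm hle (Nat.one_le_iff_ne_zero.2 (mt norm_eq_zero.1 hg)))
  obtain ⟨s, rfl⟩ := letter hu (hnorm 0)
  obtain ⟨t, rfl⟩ := letter hv (hnorm 1)
  exact huv (hletters s t hcomm)

end Nielsen

section StandardPair

/-- The pairs obtained from `(u, v)` by swaps and positive Nielsen transformations. Their entries
are products of `u` and `v` without inverses. -/
inductive PositivePair {G : Type*} [Group G] (u v : G) : G → G → Prop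
  | base : PositivePair u v u v
  | swap {x y : G} : PositivePair u v x y → PositivePair u v y x
  | mul {x y : G} : PositivePair u v x y → PositivePair u v (x * y) y

/-- The pairs obtained from `(a ^ ±1, b ^ ±1)` by positive Nielsen transformations, followed by
swaps, inversions and simultaneous conjugations; these turn out to be all the bases of `F₂`. -/
inductive StandardPair : F2 → F2 → Prop
  | positive {b c : Bool} {x y : F2} :
      PositivePair (mk [(0, b)]) (mk [(1, c)]) x y → StandardPair x y
  | swap {x y : F2} : StandardPair x y → StandardPair y x
  | inv {x y : F2} : StandardPair x y → StandardPair x⁻¹ y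
  | conj {x y : F2} (g : F2) : StandardPair x y → StandardPair (g * x * g⁻¹) (g * y * g⁻¹)

namespace StandardPair

theorem inv_right {x y : F2} (h : StandardPair x y) : StandardPair x y⁻¹ := h.swap.inv.swap

theorem mul_inv_of_positivePair {b c : Bool} {x y : F2}
    (h : PositivePair (mk [(0, b)]) (mk [(1, c)]) x y) :
    StandardPair (x * y⁻¹) y ∧ StandardPair (y * x⁻¹) x := by
  induction h with
  | base =>
    have hleft := (positive (b := b) (c := !c) PositivePair.base.mul).inv_right
    have hright := (positive (b := !b) (c := c) PositivePair.base.swap.mul).inv_right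
    simpa [FreeGroup.invRev] using And.intro hleft hright
  | swap _ ih => exact ih.symm
  | @mul x y h _ =>
    have hxy : StandardPair x (x * y) := by
      simpa [mul_assoc] using (positive h.swap.mul).swap.conj x
    exact ⟨by simpa using positive h, by simpa using hxy.inv⟩

theorem conj_mul {x y z : F2} (g : F2) (h : StandardPair (x * y) z) :
    StandardPair (g * x * g⁻¹ * (g * y * g⁻¹)) (g * z * g⁻¹) := by
  simpa [mul_assoc] using h.conj g

theorem mul_and_mul_inv {x y : F2} (h : StandardPair x y) :
    (StandardPair (x * y) y ∧ StandardPair (x * y⁻¹) y) ∧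
      StandardPair (y * x) x ∧ StandardPair (y * x⁻¹) x := by
  induction h with
  | positive h =>
    obtain ⟨hxy, hyx⟩ := mul_inv_of_positivePair h
    exact ⟨⟨positive h.mul, hxy⟩, positive h.swap.mul, hyx⟩
  | swap _ ih => exact ih.symm
  | @inv x y _ ih =>
    obtain ⟨⟨hxy, hxy'⟩, hyx, hyx'⟩ := ih
    refine ⟨⟨?_, ?_⟩, hyx'.inv_right, by simpa using hyx.inv_right⟩
    · simpa [mul_assoc] using hxy'.inv.conj y⁻¹
    · simpa [mul_assoc] using hxy.inv.conj y
  | conj g _ ih =>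
    obtain ⟨⟨hxy, hxy'⟩, hyx, hyx'⟩ := ih
    simp only [conj_inv]
    exact ⟨⟨hxy.conj_mul g, hxy'.conj_mul g⟩, hyx.conj_mul g, hyx'.conj_mul g⟩

theorem nielsenClosed : NielsenClosed StandardPair where
  swap := swap
  inv := inv
  mul h := h.mul_and_mul_inv.1.1
  conj := conj

theorem of_not_commute_letters (s t : Fin 2 × Bool) (h : ¬ Commute (mk [s]) (mk [t])) :
    StandardPair (mk [s]) (mk [t]) := by
  obtain ⟨i, b⟩ := s
  obtain ⟨j, c⟩ := t
  have comm : i = j → Commute (mk [(i, b)]) (mk [(j, c)]) := by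
    rintro rfl
    have hof : ∀ b : Bool, mk [(i, b)] = cond b (of i) (of i)⁻¹ := by rintro (_ | _) <;> rfl
    cases b <;> cases c <;> simp [hof]
  fin_cases i <;> fin_cases j
  exacts [absurd (comm rfl) h, positive PositivePair.base, positive PositivePair.base.swap,
    absurd (comm rfl) h]

theorem of_closure_eq_top {x y : F2} (h : Subgroup.closure {x, y} = ⊤) : StandardPair x y :=
  nielsenClosed.of_closure_eq_top of_not_commute_letters h

end StandardPair

end StandardPair

section Separated

variable {α : Type*}

/-- The relation satisfied by consecutive letters of a word in which the generator `i` is isolated: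
the two letters are not both powers of `i`. -/
def Separated (i : α) (s t : α × Bool) : Prop := ¬ (s.1 = i ∧ t.1 = i)

instance [DecidableEq α] (i : α) : DecidableRel (Separated i) := fun _ _ =>
  inferInstanceAs (Decidable (¬ _))

theorem isChain_separated_invRev {i : α} {L : List (α × Bool)} (hL : L.IsChain (Separated i)) :
    (FreeGroup.invRev L).IsChain (Separated i) := by
  rw [FreeGroup.invRev, isChain_reverse, isChain_map]
  exact hL.imp fun s t hst hts => hst hts.symm

variable [DecidableEq α]

theorem isChain_separated_mk_singleton (i : α) (s : α × Bool) :
    (mk [s]).toWord.IsChain (Separated i) := by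
  rw [toWord_mk, reduce_singleton]
  exact isChain_singleton s

theorem isChain_separated_of_mem_closure {s t : α × Bool} (hst : s.1 ≠ t.1) {x : FreeGroup α}
    (hx : x ∈ Submonoid.closure {mk [t], mk [s] * mk [t]}) :
    x.toWord.IsChain (Separated s.1) := by
  obtain ⟨L, rfl, hmem, hsep⟩ : ∃ L, x = mk L ∧ (∀ r ∈ L, r = s ∨ r = t) ∧
      L.IsChain (Separated s.1) := by
    have ht : ∀ r, Separated s.1 t r := fun r h => hst h.1.symm
    have hs : Separated s.1 s t := fun h => hst h.2.symm
    induction hx using Submonoid.closure_induction_left with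
    | one => exact ⟨[], rfl, by simp, isChain_nil⟩
    | mul_left u hu y _ ih =>
      obtain ⟨L, rfl, hmem, hsep⟩ := ih
      have htL : (t :: L).IsChain (Separated s.1) := isChain_cons.2 ⟨fun r _ => ht r, hsep⟩
      rcases hu with rfl | rfl
      · exact ⟨t :: L, rfl, by simpa using hmem, htL⟩
      · exact ⟨s :: t :: L, rfl, by simpa using hmem, htL.cons_cons hs⟩
  have hred : FreeGroup.IsReduced L := by
    refine (pairwise_of_forall_mem_list fun r hr r' hr' h => ?_).isChain
    rcases hmem r hr with rfl | rfl <;> rcases hmem r' hr' with rfl | rfl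
    exacts [rfl, absurd h hst, absurd h.symm hst, rfl]
  rwa [toWord_mk, hred.reduce_eq]

theorem PositivePair.eq_or_mem_closure {G : Type*} [Group G] {u v x y : G}
    (h : PositivePair u v x y) :
    ((x = u ∧ y = v) ∨ (x = v ∧ y = u)) ∨
      (x ∈ Submonoid.closure {v, u * v} ∧ y ∈ Submonoid.closure {v, u * v}) ∨
      (x ∈ Submonoid.closure {u, v * u} ∧ y ∈ Submonoid.closure {u, v * u}) := by
  induction h with
  | base => exact .inl (.inl ⟨rfl, rfl⟩)
  | swap _ ih => tauto
  | mul _ ih =>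
    right
    rcases ih with (⟨rfl, rfl⟩ | ⟨rfl, rfl⟩) | ⟨hx, hy⟩ | ⟨hx, hy⟩
    · exact .inl ⟨Submonoid.subset_closure (by simp), Submonoid.subset_closure (by simp)⟩
    · exact .inr ⟨Submonoid.subset_closure (by simp), Submonoid.subset_closure (by simp)⟩
    · exact .inl ⟨mul_mem hx hy, hy⟩
    · exact .inr ⟨mul_mem hx hy, hy⟩

theorem PositivePair.exists_isChain_separated {s t : α × Bool} (hst : s.1 ≠ t.1)
    {x y : FreeGroup α} (h : PositivePair (mk [s]) (mk [t]) x y) :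
    ∃ i, x.toWord.IsChain (Separated i) ∧ y.toWord.IsChain (Separated i) := by
  rcases h.eq_or_mem_closure with (⟨rfl, rfl⟩ | ⟨rfl, rfl⟩) | ⟨hx, hy⟩ | ⟨hx, hy⟩
  · exact ⟨s.1, isChain_separated_mk_singleton _ _, isChain_separated_mk_singleton _ _⟩
  · exact ⟨s.1, isChain_separated_mk_singleton _ _, isChain_separated_mk_singleton _ _⟩
  · exact ⟨s.1, isChain_separated_of_mem_closure hst hx, isChain_separated_of_mem_closure hst hy⟩
  · exact ⟨t.1, isChain_separated_of_mem_closure hst.symm hx,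
      isChain_separated_of_mem_closure hst.symm hy⟩

theorem StandardPair.exists_conj_isChain_separated {x y : F2} (h : StandardPair x y) :
    ∃ i g, (g * x * g⁻¹).toWord.IsChain (Separated i) ∧
      (g * y * g⁻¹).toWord.IsChain (Separated i) := by
  induction h with
  | positive h =>
    obtain ⟨i, hx, hy⟩ := h.exists_isChain_separated (by simp)
    exact ⟨i, 1, by simpa using hx, by simpa using hy⟩
  | swap _ ih =>
    obtain ⟨i, g, hx, hy⟩ := ih
    exact ⟨i, g, hy, hx⟩
  | inv _ ih =>
    obtain ⟨i, g, hx, hy⟩ := ih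
    refine ⟨i, g, ?_, hy⟩
    rw [← conj_inv, toWord_inv]
    exact isChain_separated_invRev hx
  | conj k _ ih =>
    obtain ⟨i, g, hx, hy⟩ := ih
    exact ⟨i, g * k⁻¹, by simpa [mul_assoc] using hx, by simpa [mul_assoc] using hy⟩

end Separated

section ChainBreaks

variable {β : Type*} (R : β → β → Prop) [DecidableRel R]

/-- The number of pairs of consecutive elements of a list that violate the relation `R`; it measures
how far the list is from being an `R`-chain. -/
def chainBreaks : List β → ℕ
  | a :: b :: l => chainBreaks (b :: l) + if R a b then 0 else 1
  | _ => 0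

theorem chainBreaks_eq_zero {u : List β} (hu : u.IsChain R) : chainBreaks R u = 0 := by
  induction u with
  | nil => rfl
  | cons a u ih => cases u <;> simp_all [chainBreaks]

theorem chainBreaks_replicate {a : β} (ha : ¬ R a a) (k : ℕ) :
    chainBreaks R (replicate (k + 1) a) = k := by
  induction k with
  | zero => rfl
  | succ k ih =>
    change chainBreaks R (replicate (k + 1) a) + (if R a a then 0 else 1) = k + 1
    rw [ih, if_neg ha]

theorem chainBreaks_append_le (u v : List β) :
    chainBreaks R (u ++ v) ≤ chainBreaks R u + chainBreaks R v + 1 := by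
  induction u with
  | nil => simp only [nil_append]; omega
  | cons a u ih => cases u <;> cases v <;> grind [chainBreaks]

theorem add_le_chainBreaks_append (u v : List β) :
    chainBreaks R u + chainBreaks R v ≤ chainBreaks R (u ++ v) := by
  induction u with
  | nil => simp [chainBreaks]
  | cons a u ih => cases u <;> cases v <;> grind [chainBreaks]

theorem chainBreaks_le_of_infix {u v : List β} (h : u <:+: v) :
    chainBreaks R u ≤ chainBreaks R v := by
  obtain ⟨s, t, rfl⟩ := h
  have := add_le_chainBreaks_append R (s ++ u) t
  have := add_le_chainBreaks_append R s u
  omega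

theorem mul_chainBreaks_le (n : ℕ) (u : List β) :
    n * chainBreaks R u ≤ chainBreaks R (replicate n u).flatten := by
  induction n with
  | zero => simp
  | succ n ih =>
    rw [replicate_succ, flatten_cons, Nat.succ_mul]
    have := add_le_chainBreaks_append R u (replicate n u).flatten
    omega

end ChainBreaks

section ChainBreaksFreeGroup

variable {ι α : Type*} [DecidableEq α] (R : α × Bool → α × Bool → Prop) [DecidableRel R]

theorem chainBreaks_toWord_mul_le (g h : FreeGroup α) :
    chainBreaks R (g * h).toWord ≤ chainBreaks R g.toWord + chainBreaks R h.toWord + 1 := by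
  obtain ⟨p, q, r, hg, hh, hgh, -⟩ := exists_toWord_mul_eq_append g h
  rw [hgh]
  have := chainBreaks_append_le R p r
  have := chainBreaks_le_of_infix R (hg ▸ (prefix_append p _).isInfix)
  have := chainBreaks_le_of_infix R (hh ▸ (suffix_append q r).isInfix)
  omega

variable [DecidableEq ι] {R} {ψ : FreeGroup ι →* FreeGroup α}

theorem chainBreaks_map_le_norm (hψ : ∀ s, (ψ (mk [s])).toWord.IsChain R) (w : FreeGroup ι) :
    chainBreaks R (ψ w).toWord ≤ w.norm := by
  suffices ∀ L, chainBreaks R (ψ (mk L)).toWord ≤ L.length by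
    simpa only [FreeGroup.norm, mk_toWord] using this w.toWord
  intro L
  induction L with
  | nil => simp [← one_eq_mk, chainBreaks]
  | cons s L ih =>
    have hs := chainBreaks_eq_zero R (hψ s)
    have := chainBreaks_toWord_mul_le R (ψ (mk [s])) (ψ (mk L))
    rw [← _root_.map_mul, mul_mk, singleton_append] at this
    rw [length_cons]
    omega

/-- Conjugating by `k` costs a constant, which becomes negligible against `n` when the bound is
applied to `w ^ n` instead of `w`. -/
theorem chainBreaks_le_norm_of_map_eq_conj (hψ : ∀ s, (ψ (mk [s])).toWord.IsChain R)
    {w : FreeGroup ι} {c k : FreeGroup α} (hc : IsCyclicallyReduced c.toWord)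
    (h : ψ w = k * c * k⁻¹) : chainBreaks R c.toWord ≤ w.norm := by
  let K := chainBreaks R k⁻¹.toWord + chainBreaks R k.toWord + 2
  have hpow : ∀ n, n * chainBreaks R c.toWord ≤ n * w.norm + K := fun n => by
    have hword : (c ^ n).toWord = (replicate n c.toWord).flatten := by
      rw [toWord_pow, (hc.flatten_replicate n).isReduced.reduce_eq]
    have hconj : c ^ n = k⁻¹ * ψ (w ^ n) * k := by
      rw [_root_.map_pow, h, conj_pow]
      group
    have hleft := chainBreaks_toWord_mul_le R k⁻¹ (ψ (w ^ n))
    have hright := chainBreaks_toWord_mul_le R (k⁻¹ * ψ (w ^ n)) k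
    rw [← hconj, hword] at hright
    have := mul_chainBreaks_le R n c.toWord
    have := chainBreaks_map_le_norm hψ (w ^ n)
    have := norm_pow_le_mul w n
    omega
  by_contra! hlt
  have := hpow (K + 1)
  have := Nat.mul_le_mul_left (K + 1) (Nat.succ_le_of_lt hlt)
  rw [Nat.succ_eq_add_one, mul_add] at this
  omega

end ChainBreaksFreeGroup

section Blocks

theorem CyclicallyReduced.isCyclicallyReduced {c : F2} (hc : CyclicallyReduced c.toWord) :
    IsCyclicallyReduced c.toWord := by
  refine ⟨isReduced_toWord, fun s hs t ht hst => ?_⟩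
  by_contra hne
  exact hc t ht s hs (Prod.ext hst (Bool.eq_not.2 hne))

theorem HasBlock.le_chainBreaks {i : Fin 2} {k : ℕ} {v : F2} (h : HasBlock i (k + 1) v) :
    k ≤ chainBreaks (Separated i) v.toWord := by
  rcases h with h | h <;>
  · have := chainBreaks_le_of_infix (Separated i) h
    rwa [chainBreaks_replicate _ (by simp [Separated])] at this

theorem hasBlock_of_toWord_pow_infix {k : ℕ} {v : F2} (ha : (ga ^ k).toWord <:+: v.toWord)
    (hb : (gb ^ k).toWord <:+: v.toWord) (i : Fin 2) : HasBlock i k v := by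
  rw [ga, toWord_of_pow] at ha
  rw [gb, toWord_of_pow] at hb
  fin_cases i
  exacts [.inl ha, .inl hb]

theorem closure_pair_map_eq_top {φ : F2 →* F2} (hφ : Function.Surjective φ) :
    Subgroup.closure {φ ga, φ gb} = ⊤ := by
  have hrange : Set.range (of : Fin 2 → F2) = {ga, gb} := by
    rw [← Set.image_univ]
    ext; simp [ga, gb, eq_comm]
  rw [← Set.image_pair, ← MonoidHom.map_closure, ← hrange, closure_range_of,
    Subgroup.map_top_of_surjective φ hφ]

theorem exists_conj_isChain_separated_map {φ : F2 →* F2} (hφ : Function.Surjective φ) :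
    ∃ i g, ∀ s, (g * φ (mk [s]) * g⁻¹).toWord.IsChain (Separated i) := by
  obtain ⟨i, g, ha, hb⟩ :=
    (StandardPair.of_closure_eq_top (closure_pair_map_eq_top hφ)).exists_conj_isChain_separated
  have hof : ∀ j, (g * φ (of j) * g⁻¹).toWord.IsChain (Separated i) := by
    intro j
    fin_cases j
    exacts [ha, hb]
  refine ⟨i, g, ?_⟩
  rintro ⟨j, _ | _⟩
  · rw [show mk [(j, false)] = (of j)⁻¹ from rfl, _root_.map_inv, ← conj_inv, toWord_inv]
    exact isChain_separated_invRev (hof j)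
  · exact hof j

end Blocks

theorem blocks_bounded_in_automorphic_image_general (φ : F2 →* F2) (hφ : Function.Surjective φ) :
    ∃ x : Fin 2, ∀ w c h : F2, φ w = h * c * h⁻¹ → CyclicallyReduced c.toWord →
      ¬ HasBlock x (w.toWord.length + 2) c := by
  obtain ⟨x, g, hg⟩ := exists_conj_isChain_separated_map hφ
  refine ⟨x, fun w c h hc hcr hblock => ?_⟩
  let ψ : F2 →* F2 := (MulAut.conj g).toMonoidHom.comp φ
  have hψ : ψ w = (g * h) * c * (g * h)⁻¹ := by
    change g * φ w * g⁻¹ = _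
    rw [hc]
    group
  have hle : chainBreaks (Separated x) c.toWord ≤ w.norm :=
    chainBreaks_le_norm_of_map_eq_conj (ψ := ψ) hg hcr.isCyclicallyReduced hψ
  exact absurd (hblock.le_chainBreaks.trans hle) (by simp [FreeGroup.norm])

/-- For `w` of length `l` and any automorphism `φ`, in the cyclic reduction of `φ w`
all maximal blocks of one of the generators (`a` or `b` — which one may depend on
composing with the swap/inversion automorphisms) have exponent of absolute value at
most `l + 1`; in particular the cyclic reduction cannot contain both `a^{l+2}` and
`b^{l+2}` as subwords. -/
theorem blocks_bounded_in_automorphic_image (w : F2) (l : ℕ)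
    (hl : l = w.toWord.length) (φ : F2 ≃* F2)
    (c h : F2) (hc : φ w = h * c * h⁻¹) (hcr : CyclicallyReduced c.toWord) :
    (∃ x : Fin 2, ¬ HasBlock x (l + 2) c) ∧
      ¬ ((ga ^ (l + 2)).toWord <:+: c.toWord ∧ (gb ^ (l + 2)).toWord <:+: c.toWord) := by
  obtain ⟨x, hx⟩ := blocks_bounded_in_automorphic_image_general φ.toMonoidHom φ.surjective
  have hxc : ¬ HasBlock x (l + 2) c := hl ▸ hx w c h hc hcr
  exact ⟨⟨x, hxc⟩, fun hab => hxc (hasBlock_of_toWord_pow_infix hab.1 hab.2 x)⟩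
end

section
/- For every $w \in F_2$, the word $g = a^{|w|+2} b^{|w|+2}$ is primitivity-blocking whenever $w$ is primitive: no cyclically reduced primitive element of $F_2$ whose length arises as an automorphic image of $w$ contains $g$ as a subword. More generally, there exist arbitrarily many distinct orbit-blocking words for $w$: for all integers $s, t \ge |w|+2$, the word $a^s b^t$ is orbit-blocking for $w$. -/
/-!
Call a generator isolated in a word if no two consecutive letters belong to it. A pair of generators
of `F₂` of minimal total length, among all pairs obtained by Nielsen moves and simultaneous
conjugation, is Nielsen reduced: in a product of images of letters, no factor is swallowed by its
neighbours. Hence the pair consists of two letters, and every basis of `F₂` is obtained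
from `(a, b)` by such moves. Up to conjugation and inversion of its members, the basis can
therefore be reached by multiplications without cancellation, and after the first of them both
members are products of `m` and `l * m` for two letters `l` and `m`, so that the generator of `l`
is isolated in both of them.

Thus an automorphism `φ` is, up to conjugation, a homomorphism for which some generator `c` is
isolated in the image of each letter. Each of the fewer than `|w|` junctions of letters of `w`
creates at most one pair of consecutive letters `c`; the bounded contribution of the conjugation is
removed by passing to large powers, which have no cancellation when `φ w` is cyclically reduced. So
`φ w` has at most `|w|` such pairs, while `a ^ s * b ^ t` has `s - 1` for `a` and `t - 1` for `b`.
-/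

open FreeGroup List

/-- An element is primitive if it is part of a basis of `F₂`. -/
def IsPrimitive (u : F2) : Prop := ∃ v, IsBasis u v

/-- `g` is orbit-blocking for `w`: no cyclically reduced automorphic image of `w`
contains `g` as a subword. -/
def OrbitBlocking (g w : F2) : Prop :=
  ∀ φ : F2 ≃* F2, CyclicallyReduced (φ w).toWord → ¬ g.toWord <:+: (φ w).toWord

/-- `g` is primitivity-blocking: no cyclically reduced primitive element contains `g`
as a subword. -/
def PrimitivityBlocking (g : F2) : Prop :=
  ∀ u : F2, IsPrimitive u → CyclicallyReduced u.toWord → ¬ g.toWord <:+: u.toWord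

section Cancellation

variable {α : Type*}

theorem isReduced_invRev_s7 {l : List (α × Bool)} (h : IsReduced l) : IsReduced (invRev l) := by
  rw [FreeGroup.IsReduced, invRev, isChain_reverse, isChain_map]
  exact h.imp fun x y hxy hyx => congrArg not (hxy hyx.symm).symm

theorem exists_common_prefix_of_isReduced :
    ∀ {l m : List (α × Bool)}, IsReduced l → IsReduced m →
      ∃ p u v, l = p ++ u ∧ m = p ++ v ∧ IsReduced (invRev u ++ v)
  | [], m, _, hm => ⟨[], [], m, rfl, rfl, by simpa using hm⟩
  | x :: l, [], hl, _ => ⟨[], x :: l, [], rfl, rfl, by simpa using isReduced_invRev_s7 hl⟩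
  | x :: l, y :: m, hl, hm => by
    by_cases hxy : x = y
    · subst hxy
      obtain ⟨p, u, v, rfl, rfl, h⟩ := exists_common_prefix_of_isReduced hl.tail hm.tail
      exact ⟨x :: p, u, v, rfl, rfl, h⟩
    · refine ⟨[], x :: l, y :: m, rfl, rfl, (isReduced_invRev_s7 hl).append hm ?_⟩
      rintro z hz z' hz' h
      obtain rfl : (x.1, !x.2) = z := by simpa [invRev] using hz
      obtain rfl : y = z' := by simpa using hz'
      exact Bool.not_eq.2 fun h' => hxy (Prod.ext h h')

variable [DecidableEq α]

theorem exists_common_prefix_toWord (g h : FreeGroup α) :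
    ∃ p u v, g.toWord = p ++ u ∧ h.toWord = p ++ v ∧ (g⁻¹ * h).toWord = invRev u ++ v := by
  obtain ⟨p, u, v, hg, hh, hred⟩ :=
    exists_common_prefix_of_isReduced (isReduced_toWord (x := g)) (isReduced_toWord (x := h))
  refine ⟨p, u, v, hg, hh, ?_⟩
  have hgh : g⁻¹ * h = mk (invRev u ++ v) := by
    rw [← mk_toWord (x := g), ← mk_toWord (x := h), hg, hh, ← mul_mk, ← mul_mk, ← mul_mk, ← inv_mk]
    group
  rw [hgh, toWord_mk, hred.reduce_eq]

/-- The Gromov product of `g` and `h` in the Cayley tree of the free group, based at `1`. Neither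
the subtraction nor the division truncates: the value is the length of the longest common
prefix of the reduced words of `g` and `h`, that is, the number of letters of `h` cancelled in
`g⁻¹ * h`. -/
def gromovProduct (g h : FreeGroup α) : ℕ :=
  (g.norm + h.norm - (g⁻¹ * h).norm) / 2

theorem exists_prefix_length_eq_gromovProduct (g h : FreeGroup α) :
    ∃ p, p <+: g.toWord ∧ p <+: h.toWord ∧ p.length = gromovProduct g h ∧
      (g⁻¹ * h).norm + 2 * p.length = g.norm + h.norm := by
  obtain ⟨p, u, v, hg, hh, hgh⟩ := exists_common_prefix_toWord g h
  refine ⟨p, ⟨u, hg.symm⟩, ⟨v, hh.symm⟩, ?_, ?_⟩ <;>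
  · simp only [gromovProduct, FreeGroup.norm, hg, hh, hgh, length_append, invRev_length]
    lia

theorem norm_inv_mul_add_two_mul_gromovProduct (g h : FreeGroup α) :
    (g⁻¹ * h).norm + 2 * gromovProduct g h = g.norm + h.norm := by
  obtain ⟨p, -, -, hp, h⟩ := exists_prefix_length_eq_gromovProduct g h
  rwa [hp] at h

theorem norm_mul_add_two_mul_gromovProduct (g h : FreeGroup α) :
    (g * h).norm + 2 * gromovProduct g⁻¹ h = g.norm + h.norm := by
  simpa using norm_inv_mul_add_two_mul_gromovProduct g⁻¹ h

theorem length_le_gromovProduct {g h : FreeGroup α} {p : List (α × Bool)} (hg : p <+: g.toWord)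
    (hh : p <+: h.toWord) : p.length ≤ gromovProduct g h := by
  obtain ⟨u, hg⟩ := hg
  obtain ⟨v, hh⟩ := hh
  have hgh : g⁻¹ * h = (mk u)⁻¹ * mk v := by
    rw [← mk_toWord (x := g), ← mk_toWord (x := h), ← hg, ← hh, ← mul_mk, ← mul_mk]
    group
  have hle : (g⁻¹ * h).norm ≤ u.length + v.length := by
    rw [hgh]
    refine (FreeGroup.norm_mul_le _ _).trans (Nat.add_le_add ?_ norm_mk_le)
    exact norm_inv_eq.trans_le norm_mk_le
  have hnorm := norm_inv_mul_add_two_mul_gromovProduct g h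
  have hg' : g.norm = p.length + u.length := by rw [FreeGroup.norm, ← hg, length_append]
  have hh' : h.norm = p.length + v.length := by rw [FreeGroup.norm, ← hh, length_append]
  lia

theorem gromovProduct_comm (g h : FreeGroup α) : gromovProduct g h = gromovProduct h g := by
  rw [gromovProduct, gromovProduct, add_comm, ← norm_inv_eq (x := g⁻¹ * h)]
  simp

theorem min_gromovProduct_le (g h k : FreeGroup α) :
    min (gromovProduct g h) (gromovProduct h k) ≤ gromovProduct g k := by
  obtain ⟨p, hpg, hph, hp, -⟩ := exists_prefix_length_eq_gromovProduct g h
  obtain ⟨q, hqh, hqk, hq, -⟩ := exists_prefix_length_eq_gromovProduct h k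
  rw [← hp, ← hq]
  rcases le_total p.length q.length with hpq | hqp
  · exact (min_le_left _ _).trans <|
      length_le_gromovProduct hpg ((prefix_of_prefix_length_le hph hqh hpq).trans hqk)
  · exact (min_le_right _ _).trans <|
      length_le_gromovProduct ((prefix_of_prefix_length_le hqh hph hqp).trans hpg) hqk

theorem gromovProduct_eq_of_lt {g h k : FreeGroup α}
    (hlt : gromovProduct g h < gromovProduct h k) : gromovProduct g k = gromovProduct g h := by
  have h₁ := min_gromovProduct_le g h k
  have h₂ := min_gromovProduct_le g k h
  rw [gromovProduct_comm k h] at h₂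
  lia

theorem gromovProduct_mul_right_add (g h : FreeGroup α) :
    gromovProduct g (g * h) + gromovProduct g⁻¹ h = g.norm := by
  have h₁ := norm_mul_add_two_mul_gromovProduct g h
  have h₂ := norm_inv_mul_add_two_mul_gromovProduct g (g * h)
  rw [inv_mul_cancel_left] at h₂
  lia

theorem two_mul_gromovProduct_inv_self_lt {g : FreeGroup α} (hg : g ≠ 1) :
    2 * gromovProduct g⁻¹ g < g.norm := by
  by_contra! hle
  obtain ⟨p, ⟨v, hv⟩, ⟨u, hu⟩, hp, -⟩ := exists_prefix_length_eq_gromovProduct g⁻¹ g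
  have hlen : g.norm = p.length + u.length := by rw [FreeGroup.norm, ← hu, length_append]
  rw [toWord_inv, ← hu, invRev_append] at hv
  obtain ⟨z, rfl⟩ : invRev u <+: p :=
    prefix_of_prefix_length_le ⟨_, hv.symm⟩ ⟨v, rfl⟩ (by rw [invRev_length]; lia)
  rw [invRev_append, invRev_invRev, append_assoc, append_cancel_left_eq] at hv
  have hz : invRev z = z := (append_inj hv (by simp)).1.symm
  have hz_one : (mk z : FreeGroup α) = 1 := inv_eq_self.1 (by rw [inv_mk, hz])
  apply hg
  rw [← mk_toWord (x := g), ← hu, ← mul_mk, ← mul_mk, hz_one, ← inv_mk, mul_one, inv_mul_cancel]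

theorem exists_toWord_eq_of_two_mul_gromovProduct_eq {g h : FreeGroup α} (hle : h.norm ≤ g.norm)
    (hright : 2 * gromovProduct g⁻¹ h = h.norm) (hleft : 2 * gromovProduct h⁻¹ g = h.norm) :
    ∃ p q r, h.toWord = p ++ q ∧ g.toWord = invRev q ++ r ++ invRev p := by
  obtain ⟨p, hpg, ⟨q, hq⟩, hp, -⟩ := exists_prefix_length_eq_gromovProduct g⁻¹ h
  obtain ⟨q', ⟨t, ht⟩, hq'g, hq', -⟩ := exists_prefix_length_eq_gromovProduct h⁻¹ g
  have hh : h.norm = p.length + q.length := by rw [FreeGroup.norm, ← hq, length_append]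
  obtain rfl : q' = invRev q := by
    rw [toWord_inv, ← hq, invRev_append] at ht
    exact (append_inj ht (by rw [invRev_length]; lia)).1
  obtain ⟨d, hd⟩ := hq'g
  have hg : g.norm = q.length + d.length := by
    rw [FreeGroup.norm, ← hd, length_append, invRev_length]
  obtain ⟨r, hr⟩ : invRev p <:+ d := by
    have hpg' : invRev p <:+ g.toWord := by
      obtain ⟨s, hs⟩ := hpg
      refine ⟨invRev s, ?_⟩
      rw [← invRev_append, hs, toWord_inv, invRev_invRev]
    refine suffix_of_suffix_length_le hpg' ⟨_, hd⟩ ?_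
    rw [invRev_length]
    lia
  exact ⟨p, q, r, hq.symm, by rw [← hd, ← hr, append_assoc]⟩

theorem exists_conj_norm_add_norm_lt {g h : FreeGroup α} (hh : h ≠ 1) (hle : h.norm ≤ g.norm)
    (hright : 2 * gromovProduct g⁻¹ h = h.norm) (hleft : 2 * gromovProduct h⁻¹ g = h.norm) :
    ∃ k : FreeGroup α, (k * (g * h) * k⁻¹).norm + (k * h * k⁻¹).norm < g.norm + h.norm := by
  obtain ⟨p, q, r, hpq, hqrp⟩ :=
    exists_toWord_eq_of_two_mul_gromovProduct_eq hle hright hleft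
  have hg_eq : g = (mk q)⁻¹ * mk r * (mk p)⁻¹ := by
    rw [← mk_toWord (x := g), hqrp, ← mul_mk, ← mul_mk, inv_mk, inv_mk]
  have hh_eq : h = mk p * mk q := by rw [← mk_toWord (x := h), hpq, mul_mk]
  have hgh_conj : mk q * (g * h) * (mk q)⁻¹ = mk r := by rw [hg_eq, hh_eq]; group
  have hh_conj : mk q * h * (mk q)⁻¹ = mk (q ++ p) := by rw [hh_eq, ← mul_mk]; group
  refine ⟨mk q, ?_⟩
  rw [hgh_conj, hh_conj]
  have hr : (mk r).norm ≤ r.length := norm_mk_le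
  have hqp : (mk (q ++ p)).norm ≤ q.length + p.length := norm_mk_le.trans_eq length_append
  have hpos : 0 < h.norm := Nat.pos_of_ne_zero (norm_eq_zero.not.2 hh)
  have hg_norm : g.norm = q.length + r.length + p.length := by
    simp [FreeGroup.norm, hqrp, add_assoc]
  have hh_norm : h.norm = p.length + q.length := by simp [FreeGroup.norm, hpq]
  lia

end Cancellation

section NielsenReduced

variable {α β : Type*} [DecidableEq α]

/-- The images under `f` of the letters of a free group are Nielsen reduced: in the product of the
images of three consecutive letters of a reduced word, the middle image is not swallowed by
cancellation. -/
def NielsenReduced (f : FreeGroup β →* FreeGroup α) : Prop :=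
  ∀ l m n : β × Bool, IsReduced [l, m, n] →
    gromovProduct (f (mk [l]))⁻¹ (f (mk [m])) + gromovProduct (f (mk [m]))⁻¹ (f (mk [n])) <
      (f (mk [m])).norm

theorem map_mk_cons {G : Type*} [Group G] (f : FreeGroup β →* G) (l : β × Bool)
    (w : List (β × Bool)) : f (mk (l :: w)) = f (mk [l]) * f (mk w) := by
  rw [← _root_.map_mul, mul_mk, singleton_append]

namespace NielsenReduced

variable {f : FreeGroup β →* FreeGroup α}

theorem gromovProduct_lt_norm (hf : NielsenReduced f) {l m : β × Bool} (h : IsReduced [l, m]) :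
    gromovProduct (f (mk [l]))⁻¹ (f (mk [m])) < (f (mk [l])).norm ∧
      gromovProduct (f (mk [l]))⁻¹ (f (mk [m])) < (f (mk [m])).norm := by
  have hlm := (isReduced_cons_cons.1 h).1
  have hllm := hf l l m (isReduced_cons_cons.2 ⟨fun _ => rfl, h⟩)
  have hlmm := hf l m m (isReduced_cons_cons.2 ⟨hlm, by simp⟩)
  lia

theorem gromovProduct_cons (hf : NielsenReduced f) {l m : β × Bool} {w : List (β × Bool)}
    (h : IsReduced (l :: m :: w)) :
    gromovProduct (f (mk [l]))⁻¹ (f (mk (m :: w))) =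
      gromovProduct (f (mk [l]))⁻¹ (f (mk [m])) := by
  induction w generalizing l m with
  | nil => rfl
  | cons n w ih =>
    have hmnw : IsReduced (m :: n :: w) := (isReduced_cons_cons.1 h).2
    refine gromovProduct_eq_of_lt ?_
    have hlmn := hf l m n (h.infix (prefix_append [l, m, n] w).isInfix)
    have hm := gromovProduct_mul_right_add (f (mk [m])) (f (mk (n :: w)))
    rw [ih hmnw, ← map_mk_cons] at hm
    lia

theorem norm_cons_cons (hf : NielsenReduced f) {l m : β × Bool} {w : List (β × Bool)}
    (h : IsReduced (l :: m :: w)) :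
    (f (mk (l :: m :: w))).norm + 2 * gromovProduct (f (mk [l]))⁻¹ (f (mk [m])) =
      (f (mk [l])).norm + (f (mk (m :: w))).norm := by
  rw [← hf.gromovProduct_cons h, map_mk_cons, norm_mul_add_two_mul_gromovProduct]

-- The cancellation after the first letter is kept in the bound to make the induction go through.
theorem length_add_norm_le (hf : NielsenReduced f) {l m : β × Bool} {w : List (β × Bool)}
    (h : IsReduced (l :: m :: w)) :
    w.length + 1 + (f (mk [l])).norm ≤
      (f (mk (l :: m :: w))).norm + gromovProduct (f (mk [l]))⁻¹ (f (mk [m])) := by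
  induction w generalizing l m with
  | nil =>
    have hnorm := hf.norm_cons_cons h
    have hlt := (hf.gromovProduct_lt_norm h).2
    rw [length_nil]
    lia
  | cons n w ih =>
    have hmnw := ih (isReduced_cons_cons.1 h).2
    have hnorm := hf.norm_cons_cons h
    have hlmn := hf l m n (h.infix (prefix_append [l, m, n] w).isInfix)
    rw [length_cons]
    lia

theorem exists_letter_of_norm_eq_one (hf : NielsenReduced f) {z : FreeGroup β}
    (hz : (f z).norm = 1) : ∃ l : β × Bool, f z = f (mk [l]) := by
  classical
  have hred := isReduced_toWord (x := z)
  rw [← mk_toWord (x := z)] at hz ⊢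
  match z.toWord, hred, hz with
  | [], _, hz => simp [← one_eq_mk] at hz
  | [l], _, _ => exact ⟨l, rfl⟩
  | l :: m :: w, hred, hz =>
    have hle := hf.length_add_norm_le hred
    have hlt := (hf.gromovProduct_lt_norm (hred.infix (prefix_append [l, m] w).isInfix)).1
    lia

end NielsenReduced

end NielsenReduced

section NielsenMoves

variable {G : Type*} [Group G]

/-- The pair `(u, v)` is obtained from `(x, y)` by Nielsen moves and simultaneous conjugation by
arbitrary elements of the group. The conjugations make pairs of minimal total length
Nielsen reduced, without the usual tie-breaking order on words. -/
inductive NielsenEquiv (x y : G) : G → G → Prop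
  | refl : NielsenEquiv x y x y
  | swap {u v : G} : NielsenEquiv x y u v → NielsenEquiv x y v u
  | inv {u v : G} : NielsenEquiv x y u v → NielsenEquiv x y u⁻¹ v
  | mul {u v : G} : NielsenEquiv x y u v → NielsenEquiv x y (u * v) v
  | conj {u v : G} (g : G) :
      NielsenEquiv x y u v → NielsenEquiv x y (g * u * g⁻¹) (g * v * g⁻¹)

namespace NielsenEquiv

variable {x y u v s t : G}

theorem inv_right (h : NielsenEquiv x y u v) : NielsenEquiv x y u v⁻¹ :=
  h.swap.inv.swap

theorem trans (h : NielsenEquiv x y u v) (h' : NielsenEquiv u v s t) : NielsenEquiv x y s t := by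
  induction h' with
  | refl => exact h
  | swap _ ih => exact ih.swap
  | inv _ ih => exact ih.inv
  | mul _ ih => exact ih.mul
  | conj g _ ih => exact ih.conj g

theorem symm (h : NielsenEquiv x y u v) : NielsenEquiv u v x y := by
  induction h with
  | refl => exact .refl
  | swap _ ih => exact NielsenEquiv.refl.swap.trans ih
  | @inv u v _ ih =>
    have hback := (refl (x := u⁻¹) (y := v)).inv
    rw [inv_inv] at hback
    exact hback.trans ih
  | @mul u v _ ih =>
    have hback := (refl (x := u * v) (y := v)).inv_right.mul.inv_right
    rw [mul_inv_cancel_right, inv_inv] at hback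
    exact hback.trans ih
  | @conj u v g _ ih =>
    have hback := (refl (x := g * u * g⁻¹) (y := g * v * g⁻¹)).conj g⁻¹
    have cancel (z : G) : g⁻¹ * (g * z * g⁻¹) * g⁻¹⁻¹ = z := by group
    rw [cancel, cancel] at hback
    exact hback.trans ih

theorem closure_eq_top (h : NielsenEquiv x y u v) (hxy : Subgroup.closure {x, y} = ⊤) :
    Subgroup.closure {u, v} = ⊤ := by
  induction h with
  | refl => exact hxy
  | swap _ ih => rwa [Set.pair_comm]
  | @inv u v _ ih =>
    rw [eq_top_iff, ← ih, Subgroup.closure_le, Set.pair_subset_iff]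
    have hu : u⁻¹ ∈ Subgroup.closure {u⁻¹, v} := Subgroup.subset_closure (by simp)
    exact ⟨inv_mem_iff.1 hu, Subgroup.subset_closure (by simp)⟩
  | @mul u v _ ih =>
    rw [eq_top_iff, ← ih, Subgroup.closure_le, Set.pair_subset_iff]
    have huv : u * v ∈ Subgroup.closure {u * v, v} := Subgroup.subset_closure (by simp)
    have hv : v ∈ Subgroup.closure {u * v, v} := Subgroup.subset_closure (by simp)
    exact ⟨(mul_mem_cancel_right hv).1 huv, hv⟩
  | @conj u v g _ ih =>
    have hmap := congrArg (Subgroup.map (MulAut.conj g).toMonoidHom) ih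
    rw [MonoidHom.map_closure, Set.image_pair,
      Subgroup.map_top_of_surjective _ (MulAut.conj g).surjective] at hmap
    simpa using hmap

end NielsenEquiv

/-- The homomorphism from `F₂` sending `a` to `x` and `b` to `y`. -/
def pairHom (x y : G) : F2 →* G := FreeGroup.lift ![x, y]

@[simp]
theorem pairHom_ga (x y : G) : pairHom x y ga = x := by simp [pairHom, ga]

@[simp]
theorem pairHom_gb (x y : G) : pairHom x y gb = y := by simp [pairHom, gb]

theorem pairHom_letter (x y : G) (l : Fin 2 × Bool) :
    pairHom x y (mk [l]) = if l.2 then ![x, y] l.1 else (![x, y] l.1)⁻¹ := by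
  rcases l with ⟨i, _ | _⟩ <;> simp [pairHom]

theorem pairHom_letter_ne_one {x y : G} (hx : x ≠ 1) (hy : y ≠ 1) (l : Fin 2 × Bool) :
    pairHom x y (mk [l]) ≠ 1 := by
  rcases l with ⟨i, _ | _⟩ <;> fin_cases i <;> simpa [pairHom_letter]

theorem F2_hom_ext {f f' : F2 →* G} (ha : f ga = f' ga) (hb : f gb = f' gb) : f = f' := by
  ext i
  fin_cases i
  exacts [ha, hb]

theorem pairHom_surjective {x y : G} (h : Subgroup.closure {x, y} = ⊤) :
    Function.Surjective (pairHom x y) := by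
  rw [← MonoidHom.range_eq_top, eq_top_iff, ← h, Subgroup.closure_le, Set.pair_subset_iff]
  exact ⟨⟨ga, pairHom_ga x y⟩, ⟨gb, pairHom_gb x y⟩⟩

theorem closure_ga_gb : Subgroup.closure {ga, gb} = ⊤ := by
  rw [← FreeGroup.closure_range_of (Fin 2)]
  congr 1
  ext z
  simp [ga, gb, eq_comm]

theorem closure_map_ga_map_gb {f : F2 →* G} (hf : Function.Surjective f) :
    Subgroup.closure {f ga, f gb} = ⊤ := by
  rw [← Set.image_pair, ← MonoidHom.map_closure, closure_ga_gb, Subgroup.map_top_of_surjective f hf]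

theorem nielsenEquiv_letters (x y : G) {l m : Fin 2 × Bool} (hlm : l.1 ≠ m.1) :
    NielsenEquiv x y (pairHom x y (mk [l])) (pairHom x y (mk [m])) := by
  have signed {u v : G} (h : NielsenEquiv x y u v) (b c : Bool) :
      NielsenEquiv x y (if b then u else u⁻¹) (if c then v else v⁻¹) := by
    cases b <;> cases c
    exacts [h.inv.inv_right, h.inv, h.inv_right, h]
  rcases l with ⟨i, b⟩
  rcases m with ⟨j, c⟩
  rw [pairHom_letter, pairHom_letter]
  fin_cases i <;> fin_cases j
  exacts [absurd rfl hlm, signed .refl b c, signed (.swap .refl) b c, absurd rfl hlm]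

theorem not_isCyclic_F2 : ¬ IsCyclic F2 := fun _ =>
  absurd (congrArg toWord (IsCyclic.isMulCommutative.is_comm.comm ga gb)) (by decide)

theorem ne_one_of_closure_pair_eq_top (hG : ¬ IsCyclic G) {x y : G}
    (h : Subgroup.closure {x, y} = ⊤) : x ≠ 1 := by
  rintro rfl
  rw [Subgroup.closure_insert_one, ← Subgroup.zpowers_eq_closure] at h
  exact hG (isCyclic_iff_exists_zpowers_eq_top.2 ⟨y, h⟩)

end NielsenMoves

section MinimalPairs

variable {α : Type*} [DecidableEq α]

/-- The total length of the pair `(x, y)` cannot be decreased by Nielsen moves and simultaneous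
conjugation. -/
def IsNielsenMinimal (x y : FreeGroup α) : Prop :=
  ∀ ⦃u v : FreeGroup α⦄, NielsenEquiv x y u v → x.norm + y.norm ≤ u.norm + v.norm

theorem exists_isNielsenMinimal (x y : FreeGroup α) :
    ∃ u v, NielsenEquiv x y u v ∧ IsNielsenMinimal u v := by
  obtain ⟨⟨u, v⟩, huv, hmin⟩ :=
    (measure fun p : FreeGroup α × FreeGroup α => p.1.norm + p.2.norm).wf.has_min
      {p | NielsenEquiv x y p.1 p.2} ⟨(x, y), .refl⟩
  exact ⟨u, v, huv, fun s t hst => not_lt.1 (hmin (s, t) (huv.trans hst))⟩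

namespace IsNielsenMinimal

variable {x y : FreeGroup α}

theorem swap (h : IsNielsenMinimal x y) : IsNielsenMinimal y x := by
  intro u v huv
  rw [add_comm]
  exact h (NielsenEquiv.refl.swap.trans huv)

theorem letters (h : IsNielsenMinimal x y) {l m : Fin 2 × Bool} (hlm : l.1 ≠ m.1) :
    IsNielsenMinimal (pairHom x y (mk [l])) (pairHom x y (mk [m])) := by
  have hnorm : (pairHom x y (mk [l])).norm + (pairHom x y (mk [m])).norm = x.norm + y.norm := by
    rcases l with ⟨i, _ | _⟩ <;> rcases m with ⟨j, _ | _⟩ <;> fin_cases i <;> fin_cases j <;>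
      first | exact absurd rfl hlm | simp [pairHom_letter, add_comm]
  intro u v huv
  rw [hnorm]
  exact h ((nielsenEquiv_letters x y hlm).trans huv)

theorem two_mul_gromovProduct_le_right (h : IsNielsenMinimal x y) :
    2 * gromovProduct x⁻¹ y ≤ y.norm := by
  have hle := h NielsenEquiv.refl.mul
  have hnorm := norm_mul_add_two_mul_gromovProduct x y
  lia

theorem two_mul_gromovProduct_le_left (h : IsNielsenMinimal x y) :
    2 * gromovProduct x⁻¹ y ≤ x.norm := by
  have hle := h NielsenEquiv.refl.inv.swap.inv.mul
  rw [← mul_inv_rev, norm_inv_eq, norm_inv_eq] at hle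
  have hnorm := norm_mul_add_two_mul_gromovProduct x y
  lia

theorem two_mul_gromovProduct_lt_or_lt (h : IsNielsenMinimal x y) (hy : y ≠ 1) :
    2 * gromovProduct x⁻¹ y < y.norm ∨ 2 * gromovProduct y⁻¹ x < y.norm := by
  by_contra! hge
  have hxy := h.two_mul_gromovProduct_le_right
  have hyx := h.swap.two_mul_gromovProduct_le_left
  obtain ⟨k, hk⟩ := exists_conj_norm_add_norm_lt hy
    (by have := h.two_mul_gromovProduct_le_left; lia) (hxy.antisymm hge.1) (hyx.antisymm hge.2)
  exact hk.not_ge (h (NielsenEquiv.refl.mul.conj k))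

theorem two_mul_gromovProduct_letters_le (h : IsNielsenMinimal x y) {l m : Fin 2 × Bool}
    (hm : pairHom x y (mk [m]) ≠ 1) (hlm : IsReduced [l, m]) :
    2 * gromovProduct (pairHom x y (mk [l]))⁻¹ (pairHom x y (mk [m])) ≤
        (pairHom x y (mk [l])).norm ∧
      2 * gromovProduct (pairHom x y (mk [l]))⁻¹ (pairHom x y (mk [m])) ≤
        (pairHom x y (mk [m])).norm := by
  by_cases hfst : l.1 = m.1
  · obtain rfl : l = m := Prod.ext hfst ((isReduced_cons_cons.1 hlm).1 hfst)
    exact ⟨(two_mul_gromovProduct_inv_self_lt hm).le, (two_mul_gromovProduct_inv_self_lt hm).le⟩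
  · exact ⟨(h.letters hfst).two_mul_gromovProduct_le_left,
      (h.letters hfst).two_mul_gromovProduct_le_right⟩

theorem two_mul_gromovProduct_letters_lt_or_lt (h : IsNielsenMinimal x y) {l m n : Fin 2 × Bool}
    (hm : pairHom x y (mk [m]) ≠ 1) (hlm : IsReduced [l, m]) (hmn : IsReduced [m, n]) :
    2 * gromovProduct (pairHom x y (mk [l]))⁻¹ (pairHom x y (mk [m])) <
        (pairHom x y (mk [m])).norm ∨
      2 * gromovProduct (pairHom x y (mk [m]))⁻¹ (pairHom x y (mk [n])) <
        (pairHom x y (mk [m])).norm := by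
  by_cases hfst : l.1 = m.1
  · obtain rfl : l = m := Prod.ext hfst ((isReduced_cons_cons.1 hlm).1 hfst)
    exact .inl (two_mul_gromovProduct_inv_self_lt hm)
  by_cases hfst' : m.1 = n.1
  · obtain rfl : m = n := Prod.ext hfst' ((isReduced_cons_cons.1 hmn).1 hfst')
    exact .inr (two_mul_gromovProduct_inv_self_lt hm)
  have hln : l.1 = n.1 := by lia
  by_cases hsnd : l.2 = n.2
  · obtain rfl : l = n := Prod.ext hln hsnd
    exact (h.letters hfst).two_mul_gromovProduct_lt_or_lt hm
  · -- Here `n = l⁻¹`, so equality twice would make the image of `m` and its inverse share half of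
    -- their letters.
    obtain rfl : n = (l.1, !l.2) := Prod.ext hln.symm (Bool.eq_not.2 (Ne.symm hsnd))
    have hn : pairHom x y (mk [(l.1, !l.2)]) = (pairHom x y (mk [l]))⁻¹ := by
      rw [← _root_.map_inv, inv_mk]
      rfl
    have hmin := min_gromovProduct_le (pairHom x y (mk [m]))⁻¹ (pairHom x y (mk [l]))⁻¹
      (pairHom x y (mk [m]))
    have hself := two_mul_gromovProduct_inv_self_lt hm
    rw [hn]
    lia

theorem nielsenReduced (h : IsNielsenMinimal x y) (hx : x ≠ 1) (hy : y ≠ 1) :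
    NielsenReduced (pairHom x y) := by
  intro l m n hlmn
  have hlm : IsReduced [l, m] := hlmn.infix (prefix_append [l, m] [n]).isInfix
  have hmn : IsReduced [m, n] := (isReduced_cons_cons.1 hlmn).2
  have hm := pairHom_letter_ne_one hx hy m
  have hle := (h.two_mul_gromovProduct_letters_le hm hlm).2
  have hle' := (h.two_mul_gromovProduct_letters_le (pairHom_letter_ne_one hx hy n) hmn).1
  have hlt := h.two_mul_gromovProduct_letters_lt_or_lt hm hlm hmn
  lia

end IsNielsenMinimal

/-- **Nielsen's theorem** in rank two. -/
theorem nielsenEquiv_of_closure_eq_top {x y : F2} (h : Subgroup.closure {x, y} = ⊤) :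
    NielsenEquiv x y ga gb := by
  obtain ⟨u, v, huv, hmin⟩ := exists_isNielsenMinimal x y
  have hgen := huv.closure_eq_top h
  have hred : NielsenReduced (pairHom u v) :=
    hmin.nielsenReduced (ne_one_of_closure_pair_eq_top not_isCyclic_F2 hgen)
      (ne_one_of_closure_pair_eq_top not_isCyclic_F2 (Set.pair_comm u v ▸ hgen))
  have exists_letter (i : Fin 2) : ∃ l, of i = pairHom u v (mk [l]) := by
    obtain ⟨z, hz⟩ := pairHom_surjective hgen (of i)
    obtain ⟨l, hl⟩ := hred.exists_letter_of_norm_eq_one (z := z) (by rw [hz, norm_of])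
    exact ⟨l, hz.symm.trans hl⟩
  obtain ⟨l, hl⟩ := exists_letter 0
  obtain ⟨m, hm⟩ := exists_letter 1
  have hlm : l.1 ≠ m.1 := by
    rcases l with ⟨i, b⟩
    rcases m with ⟨j, c⟩
    rintro (rfl : i = j)
    have hne : (of 0 : F2) ≠ of 1 := by decide
    have hne' : (of 0 : F2) ≠ (of 1)⁻¹ := by decide
    rw [pairHom_letter] at hl hm
    cases b <;> cases c <;> simp_all
  refine huv.trans ?_
  rw [ga, gb, hl, hm]
  exact nielsenEquiv_letters u v hlm

end MinimalPairs

section PositivePairs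

variable {α : Type*}

/-- Pairs obtained from two letters of different generators by repeatedly multiplying one member by
the other, without cancellation. -/
inductive PositivePair_s7 : FreeGroup α → FreeGroup α → Prop
  | letters {l m : α × Bool} : l.1 ≠ m.1 → PositivePair_s7 (mk [l]) (mk [m])
  | mul_left {p q : FreeGroup α} : PositivePair_s7 p q → PositivePair_s7 (p * q) q
  | mul_right {p q : FreeGroup α} : PositivePair_s7 p q → PositivePair_s7 p (q * p)

theorem PositivePair_s7.swap {p q : FreeGroup α} (h : PositivePair_s7 p q) : PositivePair_s7 q p := by
  induction h with
  | letters h => exact .letters h.symm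
  | mul_left _ ih => exact .mul_right ih
  | mul_right _ ih => exact .mul_left ih

/-- `(x, y)` becomes a positive pair after conjugating both members by the same element and possibly
inverting either of them. -/
def IsConjPositivePair (x y : FreeGroup α) : Prop :=
  ∃ g p q, PositivePair_s7 p q ∧ (x = g * p * g⁻¹ ∨ x = g * p⁻¹ * g⁻¹) ∧
    (y = g * q * g⁻¹ ∨ y = g * q⁻¹ * g⁻¹)

theorem PositivePair_s7.isConjPositivePair {p q : FreeGroup α} (h : PositivePair_s7 p q) :
    IsConjPositivePair p q :=
  ⟨1, p, q, h, by simp, by simp⟩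

namespace IsConjPositivePair

variable {x y p q : FreeGroup α}

theorem swap (h : IsConjPositivePair x y) : IsConjPositivePair y x := by
  obtain ⟨g, p, q, h, hx, hy⟩ := h
  exact ⟨g, q, p, h.swap, hy, hx⟩

theorem inv (h : IsConjPositivePair x y) : IsConjPositivePair x⁻¹ y := by
  obtain ⟨g, p, q, h, hx, hy⟩ := h
  refine ⟨g, p, q, h, ?_, hy⟩
  rcases hx with rfl | rfl
  · right; group
  · left; group

theorem inv_right (h : IsConjPositivePair x y) : IsConjPositivePair x y⁻¹ :=
  h.swap.inv.swap

theorem conj (g : FreeGroup α) (h : IsConjPositivePair x y) :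
    IsConjPositivePair (g * x * g⁻¹) (g * y * g⁻¹) := by
  obtain ⟨k, p, q, h, hx, hy⟩ := h
  refine ⟨g * k, p, q, h, ?_, ?_⟩
  · rcases hx with rfl | rfl
    · left; group
    · right; group
  · rcases hy with rfl | rfl
    · left; group
    · right; group

theorem mul_inv_of_positivePair (h : PositivePair_s7 p q) : IsConjPositivePair (p * q⁻¹) q := by
  cases h with
  | @letters l m hlm =>
    have hinv : (mk [(m.1, !m.2)] : FreeGroup α) = (mk [m])⁻¹ := by
      rw [inv_mk]
      rfl
    have hpos : PositivePair_s7 (mk [l]) (mk [(m.1, !m.2)]) := .letters hlm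
    rw [hinv] at hpos
    simpa using hpos.mul_left.isConjPositivePair.inv_right
  | mul_left hpq => simpa using hpq.isConjPositivePair
  | @mul_right _ q hpq =>
    convert (hpq.swap.mul_right.isConjPositivePair.conj q).inv using 1 <;> group

theorem mul (h : IsConjPositivePair x y) : IsConjPositivePair (x * y) y := by
  obtain ⟨g, p, q, h, rfl | rfl, rfl | rfl⟩ := h
  · convert h.mul_left.isConjPositivePair.conj g using 1; group
  · convert (mul_inv_of_positivePair h).inv_right.conj g using 1; group
  · convert ((mul_inv_of_positivePair h).inv.conj q⁻¹).conj g using 1 <;> group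
  · convert (h.mul_left.isConjPositivePair.inv.inv_right.conj q).conj g using 1 <;> group

theorem of_nielsenEquiv (hxy : IsConjPositivePair x y) (h : NielsenEquiv x y p q) :
    IsConjPositivePair p q := by
  induction h with
  | refl => exact hxy
  | swap _ ih => exact ih.swap
  | inv _ ih => exact ih.inv
  | mul _ ih => exact ih.mul
  | conj g _ ih => exact ih.conj g

end IsConjPositivePair

theorem isConjPositivePair_of_closure_eq_top {x y : F2} (h : Subgroup.closure {x, y} = ⊤) :
    IsConjPositivePair x y :=
  have hab : PositivePair_s7 ga gb := .letters (l := (0, true)) (m := (1, true)) (by decide)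
  hab.isConjPositivePair.of_nielsenEquiv (nielsenEquiv_of_closure_eq_top h).symm

end PositivePairs

section IsolatedGenerators

variable {α : Type*}

/-- The generator with index `c` is isolated in the word `w`: no two consecutive letters of `w`
belong to it. -/
def IsolatedIn (c : α) (w : List (α × Bool)) : Prop :=
  w.IsChain fun x y => ¬ (x.1 = c ∧ y.1 = c)

theorem IsolatedIn.invRev {c : α} {w : List (α × Bool)} (h : IsolatedIn c w) :
    IsolatedIn c (FreeGroup.invRev w) := by
  rw [IsolatedIn, FreeGroup.invRev, isChain_reverse, isChain_map]
  exact h.imp fun x y hxy hyx => hxy hyx.symm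

/-- Concatenations of copies of the words `m` and `l m`. When `l` and `m` have different generators,
they are reduced and the generator of `l` is isolated in them. -/
inductive SeparatedWord (l m : α × Bool) : List (α × Bool) → Prop
  | nil : SeparatedWord l m []
  | cons {w : List (α × Bool)} : SeparatedWord l m w → SeparatedWord l m (m :: w)
  | cons_cons {w : List (α × Bool)} : SeparatedWord l m w → SeparatedWord l m (l :: m :: w)

namespace SeparatedWord

variable {l m : α × Bool} {v w : List (α × Bool)}

theorem append (hv : SeparatedWord l m v) (hw : SeparatedWord l m w) :
    SeparatedWord l m (v ++ w) := by
  induction hv with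
  | nil => exact hw
  | cons _ ih => exact ih.cons
  | cons_cons _ ih => exact ih.cons_cons

theorem eq_or_eq_of_mem (hw : SeparatedWord l m w) {x : α × Bool} (hx : x ∈ w) :
    x = l ∨ x = m := by
  induction hw with
  | nil => simp at hx
  | cons _ ih => exact (mem_cons.1 hx).elim .inr ih
  | cons_cons _ ih =>
    simp only [mem_cons] at hx
    tauto

theorem isReduced (hlm : l.1 ≠ m.1) (hw : SeparatedWord l m w) : IsReduced w := by
  refine (pairwise_of_forall_mem_list fun x hx y hy hxy => ?_).isChain
  rcases hw.eq_or_eq_of_mem hx with rfl | rfl <;> rcases hw.eq_or_eq_of_mem hy with rfl | rfl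
  exacts [rfl, absurd hxy hlm, absurd hxy.symm hlm, rfl]

theorem isolatedIn (hlm : l.1 ≠ m.1) (hw : SeparatedWord l m w) : IsolatedIn l.1 w := by
  induction hw with
  | nil => exact isChain_nil
  | cons _ ih => exact isChain_cons.2 ⟨fun _ _ h => hlm h.1.symm, ih⟩
  | cons_cons _ ih =>
    exact isChain_cons_cons.2
      ⟨fun h => hlm h.2.symm, isChain_cons.2 ⟨fun _ _ h => hlm h.1.symm, ih⟩⟩

end SeparatedWord

theorem PositivePair_s7.eq_letters_or_eq_mk_separatedWord {p q : FreeGroup α} (h : PositivePair_s7 p q) :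
    ∃ l m : α × Bool, l.1 ≠ m.1 ∧ (p = mk [l] ∧ q = mk [m] ∨
      ∃ v w, SeparatedWord l m v ∧ SeparatedWord l m w ∧ p = mk v ∧ q = mk w) := by
  induction h with
  | @letters l m hlm => exact ⟨l, m, hlm, .inl ⟨rfl, rfl⟩⟩
  | mul_left _ ih =>
    obtain ⟨l, m, hlm, ⟨rfl, rfl⟩ | ⟨v, w, hv, hw, rfl, rfl⟩⟩ := ih
    · exact ⟨l, m, hlm, .inr ⟨[l, m], [m], .cons_cons .nil, .cons .nil, mul_mk, rfl⟩⟩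
    · exact ⟨l, m, hlm, .inr ⟨v ++ w, w, hv.append hw, hw, mul_mk, rfl⟩⟩
  | mul_right _ ih =>
    obtain ⟨l, m, hlm, ⟨rfl, rfl⟩ | ⟨v, w, hv, hw, rfl, rfl⟩⟩ := ih
    · exact ⟨m, l, hlm.symm, .inr ⟨[l], [m, l], .cons .nil, .cons_cons .nil, rfl, mul_mk⟩⟩
    · exact ⟨l, m, hlm, .inr ⟨v, w ++ v, hv, hw.append hv, rfl, mul_mk⟩⟩

variable [DecidableEq α]

theorem SeparatedWord.isolatedIn_toWord {l m : α × Bool} {w : List (α × Bool)} (hlm : l.1 ≠ m.1)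
    (hw : SeparatedWord l m w) : IsolatedIn l.1 (mk w).toWord := by
  rw [toWord_mk, (hw.isReduced hlm).reduce_eq]
  exact hw.isolatedIn hlm

theorem PositivePair_s7.exists_isolatedIn {p q : FreeGroup α} (h : PositivePair_s7 p q) :
    ∃ c, IsolatedIn c p.toWord ∧ IsolatedIn c q.toWord := by
  obtain ⟨l, m, hlm, ⟨rfl, rfl⟩ | ⟨v, w, hv, hw, rfl, rfl⟩⟩ := h.eq_letters_or_eq_mk_separatedWord
  · exact ⟨l.1, isChain_singleton l, isChain_singleton m⟩
  · exact ⟨l.1, hv.isolatedIn_toWord hlm, hw.isolatedIn_toWord hlm⟩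

theorem IsConjPositivePair.exists_isolatedIn {x y : FreeGroup α} (h : IsConjPositivePair x y) :
    ∃ (c : α) (g x' y' : FreeGroup α), x = g * x' * g⁻¹ ∧ y = g * y' * g⁻¹ ∧
      IsolatedIn c x'.toWord ∧ IsolatedIn c y'.toWord := by
  obtain ⟨g, p, q, hpq, hx, hy⟩ := h
  obtain ⟨c, hp, hq⟩ := hpq.exists_isolatedIn
  have inv_isolated {z : FreeGroup α} (hz : IsolatedIn c z.toWord) : IsolatedIn c z⁻¹.toWord :=
    toWord_inv z ▸ hz.invRev
  rcases hx with rfl | rfl <;> rcases hy with rfl | rfl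
  exacts [⟨c, g, p, q, rfl, rfl, hp, hq⟩, ⟨c, g, p, q⁻¹, rfl, rfl, hp, inv_isolated hq⟩,
    ⟨c, g, p⁻¹, q, rfl, rfl, inv_isolated hp, hq⟩,
    ⟨c, g, p⁻¹, q⁻¹, rfl, rfl, inv_isolated hp, inv_isolated hq⟩]

theorem exists_map_eq_conj_isolatedIn (φ : F2 ≃* F2) :
    ∃ (c : Fin 2) (g : F2) (f : F2 →* F2), (∀ z, φ z = g * f z * g⁻¹) ∧
      ∀ l, IsolatedIn c (f (mk [l])).toWord := by
  obtain ⟨c, g, x, y, hx, hy, hxc, hyc⟩ := (isConjPositivePair_of_closure_eq_top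
    (closure_map_ga_map_gb (f := φ.toMonoidHom) φ.surjective)).exists_isolatedIn
  refine ⟨c, g, pairHom x y, ?_, ?_⟩
  · have hφ : φ.toMonoidHom = (MulAut.conj g).toMonoidHom.comp (pairHom x y) :=
      F2_hom_ext (by simpa using hx) (by simpa using hy)
    exact DFunLike.congr_fun hφ
  · rintro ⟨i, _ | _⟩ <;> fin_cases i <;> simp only [pairHom_letter]
    exacts [toWord_inv x ▸ hxc.invRev, toWord_inv y ▸ hyc.invRev, hxc, hyc]

end IsolatedGenerators

section PairCounting

variable {α β : Type*} [DecidableEq α] (c : α)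

/-- The number of pairs of consecutive letters of a word that both belong to the generator with
index `c`. -/
def pairCount : List (α × Bool) → ℕ
  | [] => 0
  | [_] => 0
  | x :: y :: w => (if x.1 = c ∧ y.1 = c then 1 else 0) + pairCount (y :: w)

theorem pairCount_append_le (v w : List (α × Bool)) :
    pairCount c (v ++ w) ≤ pairCount c v + pairCount c w + 1 := by
  fun_induction pairCount c v with
  | case1 => simp
  | case2 x =>
    cases w with
    | nil => simp [pairCount]
    | cons y w =>
      simp only [singleton_append, pairCount]
      split_ifs <;> lia
  | case3 x y v ih =>
    simp only [cons_append, pairCount] at ih ⊢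
    lia

theorem pairCount_add_le_pairCount_append (v w : List (α × Bool)) :
    pairCount c v + pairCount c w ≤ pairCount c (v ++ w) := by
  fun_induction pairCount c v with
  | case1 => simp
  | case2 x => cases w <;> simp [pairCount]
  | case3 x y v ih =>
    simp only [cons_append, pairCount] at ih ⊢
    lia

theorem pairCount_le_of_isInfix {v w : List (α × Bool)} (h : v <:+: w) :
    pairCount c v ≤ pairCount c w := by
  obtain ⟨s, t, rfl⟩ := h
  have hleft := pairCount_add_le_pairCount_append c s v
  have hright := pairCount_add_le_pairCount_append c (s ++ v) t
  lia

theorem mul_pairCount_le_pairCount_flatten_replicate (n : ℕ) (w : List (α × Bool)) :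
    n * pairCount c w ≤ pairCount c (replicate n w).flatten := by
  induction n with
  | zero => simp
  | succ n ih =>
    rw [replicate_succ, flatten_cons, Nat.succ_mul]
    have happend := pairCount_add_le_pairCount_append c w (replicate n w).flatten
    lia

theorem pairCount_replicate (n : ℕ) (b : Bool) : pairCount c (replicate n (c, b)) = n - 1 := by
  induction n with
  | zero => rfl
  | succ n ih =>
    cases n with
    | zero => rfl
    | succ n =>
      simp only [replicate_succ, pairCount, and_self, if_true] at ih ⊢
      lia

variable {c}

theorem IsolatedIn.pairCount_eq_zero {w : List (α × Bool)} (h : IsolatedIn c w) :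
    pairCount c w = 0 := by
  fun_induction pairCount c w with
  | case1 => rfl
  | case2 => rfl
  | case3 x y w ih =>
    obtain ⟨hxy, hyw⟩ := isChain_cons_cons.1 h
    rw [if_neg hxy, ih hyw]

variable (c) in
theorem pairCount_toWord_mul_le (g h : FreeGroup α) :
    pairCount c (g * h).toWord ≤ pairCount c g.toWord + pairCount c h.toWord + 1 := by
  obtain ⟨p, u, v, hg, hh, hgh⟩ := exists_common_prefix_toWord g⁻¹ h
  have hg' : g.toWord = invRev u ++ invRev p := by
    rw [← invRev_append, ← hg, toWord_inv, invRev_invRev]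
  rw [inv_inv] at hgh
  rw [hgh, hg', hh]
  have huv := pairCount_append_le c (invRev u) v
  have hup := pairCount_add_le_pairCount_append c (invRev u) (invRev p)
  have hpv := pairCount_add_le_pairCount_append c p v
  lia

theorem pairCount_toWord_map_mk_le {f : FreeGroup β →* FreeGroup α}
    (hf : ∀ l, IsolatedIn c (f (mk [l])).toWord) (w : List (β × Bool)) :
    pairCount c (f (mk w)).toWord ≤ w.length := by
  induction w with
  | nil => simp [← one_eq_mk, pairCount]
  | cons l w ih =>
    have hmul := pairCount_toWord_mul_le c (f (mk [l])) (f (mk w))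
    rw [← map_mk_cons, (hf l).pairCount_eq_zero] at hmul
    rw [length_cons]
    lia

theorem mul_pairCount_toWord_le_pairCount_toWord_pow {u : FreeGroup α}
    (hu : IsCyclicallyReduced u.toWord) (n : ℕ) :
    n * pairCount c u.toWord ≤ pairCount c (u ^ n).toWord := by
  rw [FreeGroup.toWord_pow, (hu.flatten_replicate n).isReduced.reduce_eq]
  exact mul_pairCount_le_pairCount_flatten_replicate c n u.toWord

/-- The cost of the conjugation is bounded independently of `w`, so it disappears on comparing large
powers. -/
theorem pairCount_toWord_conj_map_le [DecidableEq β] {f : FreeGroup β →* FreeGroup α}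
    (hf : ∀ l, IsolatedIn c (f (mk [l])).toWord) (g : FreeGroup α) (w : FreeGroup β)
    (hcyc : IsCyclicallyReduced (g * f w * g⁻¹).toWord) :
    pairCount c (g * f w * g⁻¹).toWord ≤ w.toWord.length := by
  set K := pairCount c g.toWord + pairCount c g⁻¹.toWord + 2
  have upper (n : ℕ) : pairCount c ((g * f w * g⁻¹) ^ n).toWord ≤ n * w.toWord.length + K := by
    have hpow : (g * f w * g⁻¹) ^ n = g * f (w ^ n) * g⁻¹ := by rw [conj_pow, _root_.map_pow]
    have hf_pow := pairCount_toWord_map_mk_le hf (replicate n w.toWord).flatten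
    have hlen : (replicate n w.toWord).flatten.length = n * w.toWord.length := by simp
    rw [← pow_mk, mk_toWord, hlen] at hf_pow
    have hmul := pairCount_toWord_mul_le c (g * f (w ^ n)) g⁻¹
    have hmul' := pairCount_toWord_mul_le c g (f (w ^ n))
    rw [hpow]
    lia
  by_contra! hlt
  have hpow : (K + 1) * (w.toWord.length + 1) ≤ (K + 1) * w.toWord.length + K :=
    calc (K + 1) * (w.toWord.length + 1)
        ≤ (K + 1) * pairCount c (g * f w * g⁻¹).toWord := Nat.mul_le_mul_left _ hlt
      _ ≤ pairCount c ((g * f w * g⁻¹) ^ (K + 1)).toWord :=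
        mul_pairCount_toWord_le_pairCount_toWord_pow hcyc (K + 1)
      _ ≤ (K + 1) * w.toWord.length + K := upper (K + 1)
  lia

end PairCounting

section Blocking

theorem CyclicallyReduced.isCyclicallyReduced_s7 {u : F2} (h : CyclicallyReduced u.toWord) :
    IsCyclicallyReduced u.toWord := by
  refine ⟨isReduced_toWord, fun q hq p hp hqp => ?_⟩
  by_contra hne
  exact h p hp q hq (Prod.ext hqp (Bool.eq_not.2 hne))

theorem HasBlock.le_pairCount_add_one {c : Fin 2} {k : ℕ} {v : F2} (h : HasBlock c k v) :
    k ≤ pairCount c v.toWord + 1 := by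
  rcases h with h | h <;>
  · have hle := pairCount_le_of_isInfix c h
    rw [pairCount_replicate] at hle
    lia

theorem exists_not_hasBlock_map (φ : F2 ≃* F2) (w : F2) (h : CyclicallyReduced (φ w).toWord) :
    ∃ c, ¬ HasBlock c (w.toWord.length + 2) (φ w) := by
  obtain ⟨c, g, f, hφ, hf⟩ := exists_map_eq_conj_isolatedIn φ
  refine ⟨c, fun hblock => ?_⟩
  have hcyc := h.isCyclicallyReduced_s7
  rw [hφ] at hcyc
  have hcount := pairCount_toWord_conj_map_le hf g w hcyc
  rw [← hφ] at hcount
  have hle := hblock.le_pairCount_add_one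
  lia

theorem orbitBlocking_of_forall_hasBlock {g w : F2}
    (hg : ∀ c, HasBlock c (w.toWord.length + 2) g) : OrbitBlocking g w := by
  intro φ hφ hg_infix
  obtain ⟨c, hc⟩ := exists_not_hasBlock_map φ w hφ
  exact hc ((hg c).imp (·.trans hg_infix) (·.trans hg_infix))

theorem toWord_ga_pow_mul_gb_pow (s t : ℕ) :
    (ga ^ s * gb ^ t).toWord = replicate s (0, true) ++ replicate t (1, true) := by
  have hred : IsReduced (replicate s ((0 : Fin 2), true) ++ replicate t (1, true)) := by
    refine (isChain_replicate_of_rel s fun _ => rfl).append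
      (isChain_replicate_of_rel t fun _ => rfl) fun x hx y hy _ => ?_
    rw [eq_of_mem_replicate (mem_of_getLast? hx), eq_of_mem_replicate (mem_of_head? hy)]
  rw [toWord_mul, ga, gb, toWord_of_pow, toWord_of_pow, hred.reduce_eq]

theorem hasBlock_ga_pow_mul_gb_pow {k s t : ℕ} (hs : k ≤ s) (ht : k ≤ t) (c : Fin 2) :
    HasBlock c k (ga ^ s * gb ^ t) := by
  have replicate_prefix {n : ℕ} (hn : k ≤ n) (l : Fin 2 × Bool) :
      replicate k l <+: replicate n l :=
    prefix_replicate_iff.2 ⟨by rwa [length_replicate], by rw [length_replicate]⟩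
  left
  rw [toWord_ga_pow_mul_gb_pow]
  fin_cases c
  · exact (replicate_prefix hs _).isInfix.trans (prefix_append _ _).isInfix
  · exact (replicate_prefix ht _).isInfix.trans (suffix_append _ _).isInfix

theorem IsPrimitive.exists_mulEquiv_apply_eq {u w : F2} (hw : IsPrimitive w) (hu : IsPrimitive u) :
    ∃ φ : F2 ≃* F2, φ w = u := by
  obtain ⟨_, ψ, rfl, -⟩ := hw
  obtain ⟨_, χ, rfl, -⟩ := hu
  exact ⟨ψ.symm.trans χ, by simp⟩

theorem OrbitBlocking.primitivityBlocking {g w : F2} (h : OrbitBlocking g w) (hw : IsPrimitive w) :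
    PrimitivityBlocking g := by
  intro u hu hcyc
  obtain ⟨φ, rfl⟩ := hw.exists_mulEquiv_apply_eq hu
  exact h φ hcyc

end Blocking

/-- For every `w`, the word `a^{|w|+2} b^{|w|+2}` is primitivity-blocking whenever `w`
is primitive, and more generally `a^s b^t` is orbit-blocking for `w` for all
`s, t ≥ |w| + 2`. -/
theorem many_orbit_blocking_words (w : F2) :
    (IsPrimitive w →
      PrimitivityBlocking (ga ^ (w.toWord.length + 2) * gb ^ (w.toWord.length + 2))) ∧
    (∀ s t : ℕ, w.toWord.length + 2 ≤ s → w.toWord.length + 2 ≤ t →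
      OrbitBlocking (ga ^ s * gb ^ t) w) := by
  have blocking (s t : ℕ) (hs : w.toWord.length + 2 ≤ s) (ht : w.toWord.length + 2 ≤ t) :
      OrbitBlocking (ga ^ s * gb ^ t) w :=
    orbitBlocking_of_forall_hasBlock (hasBlock_ga_pow_mul_gb_pow hs ht)
  exact ⟨(blocking _ _ le_rfl le_rfl).primitivityBlocking, blocking⟩
end
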